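/- arXiv:2312.06170 — 5 statements merged into one kernel-verified Lean document; each statement's English description precedes it below -/
import Mathlib

section
/- Let f : [−π,π] → ℝ be even and bounded, with a finite number of (weak) local maximum points, local minimum points, and discontinuity points, with essential range ER(f) = [inf_{[0,π]} f, sup_{[0,π]} f] and with (inf_{[0,π]} f, sup_{[0,π]} f) ⊆ f([0,π]). Then for every n there exist an asymptotically uniform grid {x_{i,n}}_{i=1,…,n} in [0,π], a real unitary n×n matrix V_n, and orderings of the eigenvalues of T_n(f) and H_n(f) such that: Y_n = V_n Δ_n V_nᵀ with Δ_n = diag_{i=1,…,n}((−1)^{i+1}); T_n(f) = V_n D_n V_nᵀ with D_n = diag_{i=1,…,n}(λ_i(T_n(f))); H_n(f) = V_n Δ_n D_n V_nᵀ; λ_i(H_n(f)) = (−1)^{i+1} λ_i(T_n(f)) for i = 1,…,n; and λ_i(T_n(f)) = f(x_{i,n}) for i = 1,…,n. -/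
open MeasureTheory Matrix Filter

/-- The `k`-th Fourier coefficient of `f : ℝ → ℂ` on `[-π, π]`. -/
noncomputable def fourierCoef (f : ℝ → ℂ) (k : ℤ) : ℂ :=
  (1 / (2 * Real.pi)) * ∫ x in (-Real.pi)..Real.pi, f x * Complex.exp (-Complex.I * k * x)

/-- The `n × n` Toeplitz matrix generated by `f` (real version). -/
noncomputable def toeplitzR (f : ℝ → ℂ) (n : ℕ) : Matrix (Fin n) (Fin n) ℝ :=
  Matrix.of fun i j => (fourierCoef f ((i : ℤ) - (j : ℤ))).re

/-- The `n × n` exchange (flip) matrix `Y_n`. -/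
def flipM (n : ℕ) : Matrix (Fin n) (Fin n) ℝ :=
  Matrix.of fun i j => if (i : ℕ) + (j : ℕ) = n - 1 then 1 else 0

/-- Essential range of a real-valued function on a set. -/
def essRangeR (f : ℝ → ℝ) (s : Set ℝ) : Set ℝ :=
  {z : ℝ | ∀ ε > 0, 0 < volume {x ∈ s | |f x - z| < ε}}

/-!
Since `f` is even, `T = T_n(f)` is real symmetric and commutes with `Y = Y_n`, so the two matrices
have a common orthonormal eigenbasis. The signs by which `Y` acts on it sum to `tr Y`, which is also
the sum of the signs `(-1)^i`; hence the basis can be ordered so that these signs alternate. It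
remains to permute the eigenvalues of `T` within each parity so that they become samples of `f`.

Let `v` be a unit eigenvector of `T` with eigenvalue `l`, and let `μ_v` be the probability measure
with density `|∑ₐ vₐ e^{iax}|²` on the circle, for which `∫ g dμ_v = vᵀ T_n(g) v`. Then `l` is the
mean of `f` under `μ_v`; in particular `l` lies strictly between the infimum and the supremum of
`f`, so it is a value of `f`. The variances of `f` under these measures sum to
`n ∫ f² - ∑ T_ab² = o(n)` by Parseval's identity, and `tr (Y T_n(g)) = o(n)`. Consequently the
eigenvalues of either parity are asymptotically distributed like `f`: an open set `U` receives at
least `n/2` times the normalized measure of `f⁻¹(U)`, up to `o(n)`.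

Cut `[0, π]` into `k + 1` cells and discard the discontinuities and local extrema. On what is left
`f` is an open map, so for every set `C` of cells the eigenvalues of a given parity attained by `f`
on `C` are at least as numerous, up to a small proportion of `n / k`, as the grid points of that
parity in `C`. Enlarging `C` by the adjacent cells gains a whole cell, which absorbs the error.
This is Hall's condition, and the marriage theorem moves each grid point by at most `2π / (k + 1)`
to a point where `f` takes the eigenvalue matched with it. Letting `k` grow slowly with `n` gives
the asymptotically uniform grid.
-/

namespace ToeplitzFlip

open ProbabilityTheory Asymptotics
open scoped Topology

/-! ### Simultaneous diagonalization with the flip -/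

open Module in
lemma exists_orthonormalBasis_eigenvectors_of_commute {𝕜 E ι : Type*} [RCLike 𝕜]
    [NormedAddCommGroup E] [InnerProductSpace 𝕜 E] [FiniteDimensional 𝕜 E] [Fintype ι]
    (hι : finrank 𝕜 E = Fintype.card ι) {A B : E →ₗ[𝕜] E} (hA : A.IsSymmetric)
    (hB : B.IsSymmetric) (hAB : Commute A B) :
    ∃ (b : OrthonormalBasis ι 𝕜 E) (α β : ι → 𝕜),
      ∀ i, A (b i) = α i • b i ∧ B (b i) = β i • b i := by
  classical
  let W : 𝕜 × 𝕜 → Submodule 𝕜 E := fun p => End.eigenspace A p.2 ⊓ End.eigenspace B p.1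
  have hW : DirectSum.IsInternal W :=
    LinearMap.IsSymmetric.directSum_isInternal_of_commute hA hB hAB
  have hW' : DirectSum.IsInternal fun p : {p // W p ≠ ⊥} => W p :=
    DirectSum.isInternal_ne_bot_iff.mpr hW
  have horth : OrthogonalFamily 𝕜 (fun p : {p // W p ≠ ⊥} => W p) fun p => (W p).subtypeₗᵢ :=
    (LinearMap.IsSymmetric.orthogonalFamily_eigenspace_inf_eigenspace hA hB).comp
      Subtype.val_injective
  have : Fintype {p // W p ≠ ⊥} :=
    (WellFoundedGT.finite_ne_bot_of_iSupIndep hW.submodule_iSupIndep).fintype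
  let e : Fin (Fintype.card ι) ≃ ι := (Fintype.equivFin ι).symm
  let idx : ι → {p // W p ≠ ⊥} := fun i =>
    hW'.subordinateOrthonormalBasisIndex hι (e.symm i) horth
  refine ⟨(hW'.subordinateOrthonormalBasis hι horth).reindex e,
    fun i => (idx i).1.2, fun i => (idx i).1.1, fun i => ?_⟩
  have hmem := hW'.subordinateOrthonormalBasis_subordinate hι (e.symm i) horth
  rw [OrthonormalBasis.reindex_apply]
  exact ⟨End.mem_eigenspace_iff.mp hmem.1, End.mem_eigenspace_iff.mp hmem.2⟩

lemma mul_diagonal_of_mulVec_col {ι R : Type*} [Fintype ι] [DecidableEq ι] [CommSemiring R]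
    {A V : Matrix ι ι R} {l : ι → R} (h : ∀ j, A *ᵥ V.col j = l j • V.col j) :
    A * V = V * diagonal l := by
  ext i j
  rw [Matrix.mul_diagonal, mul_comm (V i j)]
  exact congrFun (h j) i

lemma exists_orthogonal_diagonalization_of_commute {ι : Type*} [Fintype ι] [DecidableEq ι]
    {A B : Matrix ι ι ℝ} (hA : A.IsSymm) (hB : B.IsSymm) (hAB : Commute A B) :
    ∃ (V : Matrix ι ι ℝ) (α β : ι → ℝ), V * Vᵀ = 1 ∧
      A = V * diagonal α * Vᵀ ∧ B = V * diagonal β * Vᵀ := by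
  have symm_toEuclideanLin {M : Matrix ι ι ℝ} (hM : M.IsSymm) : M.toEuclideanLin.IsSymmetric :=
    Matrix.isSymmetric_toEuclideanLin_iff.mpr ((conjTranspose_eq_transpose_of_trivial M).trans hM)
  have hcomm : Commute A.toEuclideanLin B.toEuclideanLin := by
    simp only [toEuclideanLin_eq_toLin_orthonormal]
    exact hAB.map (Matrix.toLinAlgEquiv (EuclideanSpace.basisFun ι ℝ).toBasis)
  obtain ⟨b, α, β, hb⟩ := exists_orthonormalBasis_eigenvectors_of_commute
    finrank_euclideanSpace (symm_toEuclideanLin hA) (symm_toEuclideanLin hB) hcomm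
  let V : Matrix ι ι ℝ := Matrix.of fun i j => b j i
  have hVV : V * Vᵀ = 1 := by
    rw [mul_eq_one_comm]
    ext i j
    have h := orthonormal_iff_ite.mp b.orthonormal i j
    rw [Matrix.one_apply, ← h, PiLp.inner_apply]
    simp [Matrix.mul_apply, V, mul_comm]
  have diag_of_eig {M : Matrix ι ι ℝ} {μ : ι → ℝ} (h : ∀ j, M.toEuclideanLin (b j) = μ j • b j) :
      M = V * diagonal μ * Vᵀ := by
    have hMV : M * V = V * diagonal μ :=
      mul_diagonal_of_mulVec_col fun j => congrArg WithLp.ofLp (h j)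
    rw [← hMV, Matrix.mul_assoc, hVV, Matrix.mul_one]
  exact ⟨V, α, β, hVV, diag_of_eig fun j => (hb j).1, diag_of_eig fun j => (hb j).2⟩

lemma flipM_isSymm (n : ℕ) : (flipM n).IsSymm := by
  ext i j
  simp [flipM, add_comm]

lemma flipM_apply (n : ℕ) (i j : Fin n) : flipM n i j = if j = i.rev then 1 else 0 := by
  simp only [flipM, Matrix.of_apply, Fin.ext_iff, Fin.val_rev]
  exact if_congr (by omega) rfl rfl

lemma flipM_mul_apply {n : ℕ} (A : Matrix (Fin n) (Fin n) ℝ) (i j : Fin n) :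
    (flipM n * A) i j = A i.rev j := by
  simp [Matrix.mul_apply, flipM_apply]

lemma mul_flipM_apply {n : ℕ} (A : Matrix (Fin n) (Fin n) ℝ) (i j : Fin n) :
    (A * flipM n) i j = A i j.rev := by
  rw [← (flipM_isSymm n).eq, ← Matrix.transpose_apply (A * _), Matrix.transpose_mul,
    Matrix.transpose_transpose, flipM_mul_apply, Matrix.transpose_apply]

lemma flipM_mul_self (n : ℕ) : flipM n * flipM n = 1 := by
  ext i j
  rw [flipM_mul_apply, flipM_apply, Matrix.one_apply]
  simp [eq_comm]

/-- The sign of the `i`-th diagonal entry of `Δ_n`: with indices starting at `0` it is `(-1)^i`. -/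
def altSign {n : ℕ} (i : Fin n) : ℤˣ := (-1) ^ (i : ℕ)

lemma coe_altSign {n : ℕ} (i : Fin n) : ((altSign i : ℤ) : ℝ) = (-1) ^ (i : ℕ) := by
  simp [altSign]

lemma trace_flipM (n : ℕ) : (flipM n).trace = ∑ i : Fin n, ((altSign i : ℤ) : ℝ) := by
  have htrace : (flipM n).trace = ∑ i : Fin n, if (i : ℕ) + i = n - 1 then (1 : ℝ) else 0 := by
    simp [Matrix.trace, flipM]
  simp_rw [htrace, coe_altSign]
  rw [Fin.sum_univ_eq_sum_range (fun i => (-1 : ℝ) ^ i) n, neg_one_geom_sum,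
    Fin.sum_univ_eq_sum_range (fun i => if i + i = n - 1 then (1 : ℝ) else 0) n]
  split_ifs with hn
  · obtain ⟨k, hk⟩ := hn
    exact Finset.sum_eq_zero fun i hi => if_neg (by have := Finset.mem_range.mp hi; omega)
  · obtain ⟨k, hk⟩ := Nat.not_even_iff_odd.mp hn
    rw [Finset.sum_eq_single_of_mem k (Finset.mem_range.mpr (by omega))
      fun i _ hik => if_neg (by omega), if_pos (by omega)]

lemma exists_perm_comp_eq_of_sum_eq {ι : Type*} [Fintype ι] {s t : ι → ℤˣ}
    (h : ∑ i, (s i : ℤ) = ∑ i, (t i : ℤ)) : ∃ σ : Equiv.Perm ι, s ∘ σ = t := by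
  classical
  have sum_eq (u : ι → ℤˣ) :
      ∑ i, (u i : ℤ) = 2 * Fintype.card {i // u i = 1} - Fintype.card ι := by
    have (i : ι) : (u i : ℤ) = 2 * (if u i = 1 then 1 else 0) - 1 := by
      rcases Int.units_eq_one_or (u i) with hi | hi <;> simp [hi]
    simp_rw [this, Finset.sum_sub_distrib, ← Finset.mul_sum]
    simp [Fintype.card_subtype]
  let e : {i // t i = 1} ≃ {i // s i = 1} :=
    Fintype.equivOfCardEq (by have := sum_eq s; have := sum_eq t; omega)
  refine ⟨e.extendSubtype, funext fun i => ?_⟩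
  by_cases hi : t i = 1
  · rw [Function.comp_apply, hi]
    exact e.extendSubtype_mem i hi
  · have hi' := e.extendSubtype_not_mem i hi
    rw [Function.comp_apply, (Int.units_eq_one_or _).resolve_left hi,
      (Int.units_eq_one_or _).resolve_left hi']

/-- `V` is an orthogonal matrix of eigenvectors of `T`, with eigenvalues `l`, whose columns are
alternately symmetric and skew-symmetric under the flip. -/
structure IsAdapted {n : ℕ} (T V : Matrix (Fin n) (Fin n) ℝ) (l : Fin n → ℝ) : Prop where
  orth : V * Vᵀ = 1
  flip : flipM n = V * diagonal (fun i : Fin n => (-1) ^ (i : ℕ)) * Vᵀ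
  eig : T = V * diagonal l * Vᵀ

lemma conj_diagonal_submatrix_perm {ι R : Type*} [Fintype ι] [DecidableEq ι] [CommSemiring R]
    (V : Matrix ι ι R) (d : ι → R) (σ : Equiv.Perm ι) :
    V.submatrix id σ * diagonal (d ∘ σ) * (V.submatrix id σ)ᵀ = V * diagonal d * Vᵀ := by
  ext i j
  rw [Matrix.mul_apply, Matrix.mul_apply]
  simp only [Matrix.mul_diagonal, Matrix.transpose_apply, Matrix.submatrix_apply, id,
    Function.comp_apply]
  exact Equiv.sum_comp σ fun x => V i x * d x * V j x

lemma submatrix_perm_mul_transpose {ι R : Type*} [Fintype ι] [CommSemiring R]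
    (V : Matrix ι ι R) (σ : Equiv.Perm ι) :
    V.submatrix id σ * (V.submatrix id σ)ᵀ = V * Vᵀ := by
  simp [Matrix.transpose_submatrix, Matrix.submatrix_mul_equiv]

lemma exists_isAdapted {n : ℕ} {T : Matrix (Fin n) (Fin n) ℝ} (hT : T.IsSymm)
    (hTY : Commute T (flipM n)) : ∃ V l, IsAdapted T V l := by
  obtain ⟨V, l, s, hV, hl, hs⟩ :=
    exists_orthogonal_diagonalization_of_commute hT (flipM_isSymm n) hTY
  have hV' : Vᵀ * V = 1 := mul_eq_one_comm.mp hV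
  have hdiag : diagonal s = Vᵀ * flipM n * V := by
    simp [hs, ← Matrix.mul_assoc, hV', Matrix.mul_assoc _ Vᵀ V]
  have hsq : diagonal s * diagonal s = 1 := by
    rw [hdiag, show Vᵀ * flipM n * V * (Vᵀ * flipM n * V)
      = Vᵀ * (flipM n * (V * Vᵀ) * flipM n) * V by simp only [Matrix.mul_assoc], hV, Matrix.mul_one,
      flipM_mul_self, Matrix.mul_one, hV']
  have hunit (i : Fin n) : ∃ u : ℤˣ, s i = ((u : ℤ) : ℝ) := by
    have : s i * s i = 1 := by simpa using congrFun₂ hsq i i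
    rcases mul_self_eq_one_iff.mp this with h | h
    exacts [⟨1, by simp [h]⟩, ⟨-1, by simp [h]⟩]
  choose u hu using hunit
  have hsum : ∑ i, (u i : ℤ) = ∑ i : Fin n, (altSign i : ℤ) := by
    have h := trace_flipM n
    rw [hs, Matrix.trace_mul_cycle, hV', Matrix.one_mul, Matrix.trace_diagonal] at h
    simp_rw [hu] at h
    exact_mod_cast h
  obtain ⟨σ, hσ⟩ := exists_perm_comp_eq_of_sum_eq hsum
  refine ⟨V.submatrix id σ, l ∘ σ, (submatrix_perm_mul_transpose V σ).trans hV, ?_,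
    hl.trans (conj_diagonal_submatrix_perm V l σ).symm⟩
  rw [hs.trans (conj_diagonal_submatrix_perm V s σ).symm]
  congr 3
  funext i
  rw [Function.comp_apply, hu, ← coe_altSign, ← hσ, Function.comp_apply]

namespace IsAdapted

variable {n : ℕ} {T V : Matrix (Fin n) (Fin n) ℝ} {l : Fin n → ℝ}

lemma transpose_mul_self (h : IsAdapted T V l) : Vᵀ * V = 1 := mul_eq_one_comm.mp h.orth

lemma permute (h : IsAdapted T V l) {σ : Equiv.Perm (Fin n)}
    (hσ : ∀ i, altSign (σ i) = altSign i) : IsAdapted T (V.submatrix id σ) (l ∘ σ) where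
  orth := (submatrix_perm_mul_transpose V σ).trans h.orth
  flip := by
    rw [h.flip.trans (conj_diagonal_submatrix_perm V _ σ).symm]
    congr 3
    funext i
    rw [Function.comp_apply, ← coe_altSign, ← coe_altSign, hσ]
  eig := h.eig.trans (conj_diagonal_submatrix_perm V l σ).symm

lemma flipM_mul (h : IsAdapted T V l) :
    flipM n * T = V * (diagonal (fun i : Fin n => (-1) ^ (i : ℕ)) * diagonal l) * Vᵀ := by
  nth_rw 1 [h.flip, h.eig]
  simp only [Matrix.mul_assoc]
  rw [← Matrix.mul_assoc Vᵀ V, h.transpose_mul_self, Matrix.one_mul]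

lemma col_dotProduct_self (h : IsAdapted T V l) (j : Fin n) : V.col j ⬝ᵥ V.col j = 1 := by
  simpa [Matrix.mul_apply, dotProduct] using congrFun₂ h.transpose_mul_self j j

lemma mulVec_col (h : IsAdapted T V l) (j : Fin n) : T *ᵥ V.col j = l j • V.col j := by
  have hTV : T * V = V * diagonal l := by
    rw [h.eig, Matrix.mul_assoc, h.transpose_mul_self, Matrix.mul_one]
  ext i
  rw [Pi.smul_apply, smul_eq_mul, mul_comm]
  exact (congrFun₂ hTV i j).trans (Matrix.mul_diagonal ..)

lemma col_dotProduct_mulVec_col (h : IsAdapted T V l) (j : Fin n) :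
    V.col j ⬝ᵥ (T *ᵥ V.col j) = l j := by
  rw [h.mulVec_col, dotProduct_smul, h.col_dotProduct_self, smul_eq_mul, mul_one]

end IsAdapted

lemma sum_mul_col_dotProduct_mulVec_col {ι R : Type*} [Fintype ι] [DecidableEq ι] [CommSemiring R]
    (M V : Matrix ι ι R) (w : ι → R) :
    ∑ j, w j * (V.col j ⬝ᵥ (M *ᵥ V.col j)) = (V * diagonal w * Vᵀ * M).trace := by
  rw [Matrix.mul_assoc, Matrix.trace_mul_comm, ← Matrix.mul_assoc, Matrix.trace]
  refine Finset.sum_congr rfl fun j _ => ?_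
  rw [Matrix.diag_apply, Matrix.mul_diagonal, mul_comm, Matrix.mul_assoc, Matrix.mul_apply]
  rfl

namespace IsAdapted

variable {n : ℕ} {T V : Matrix (Fin n) (Fin n) ℝ} {l : Fin n → ℝ}

lemma sum_col_dotProduct_mulVec_col (h : IsAdapted T V l) (M : Matrix (Fin n) (Fin n) ℝ) :
    ∑ j, V.col j ⬝ᵥ (M *ᵥ V.col j) = M.trace := by
  simpa [h.orth] using sum_mul_col_dotProduct_mulVec_col M V 1

lemma sum_filter_altSign_col_dotProduct_mulVec_col (h : IsAdapted T V l)
    (M : Matrix (Fin n) (Fin n) ℝ) (s : ℤˣ) :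
    ∑ j with altSign j = s, V.col j ⬝ᵥ (M *ᵥ V.col j)
      = (M.trace + (s : ℤ) * (flipM n * M).trace) / 2 := by
  have hind (j : Fin n) :
      (if altSign j = s then (1 : ℝ) else 0) = (1 + (s : ℤ) * (-1) ^ (j : ℕ)) / 2 := by
    rw [← coe_altSign]
    rcases Int.units_eq_one_or s with rfl | rfl <;>
      rcases Int.units_eq_one_or (altSign j) with hj | hj <;> norm_num [hj]
  calc ∑ j with altSign j = s, V.col j ⬝ᵥ (M *ᵥ V.col j)
      = ∑ j : Fin n, (1 + (s : ℤ) * (-1) ^ (j : ℕ)) / 2 * (V.col j ⬝ᵥ (M *ᵥ V.col j)) := by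
        simp_rw [← hind, ite_mul, one_mul, zero_mul, Finset.sum_filter]
    _ = (∑ j, V.col j ⬝ᵥ (M *ᵥ V.col j)
          + (s : ℤ) * ∑ j : Fin n, (-1) ^ (j : ℕ) * (V.col j ⬝ᵥ (M *ᵥ V.col j))) / 2 := by
        rw [Finset.mul_sum, ← Finset.sum_add_distrib, Finset.sum_div]
        exact Finset.sum_congr rfl fun j _ => by ring
    _ = _ := by
        rw [h.sum_col_dotProduct_mulVec_col, sum_mul_col_dotProduct_mulVec_col, ← h.flip]

lemma sum_sq_eigenvalues (h : IsAdapted T V l) : ∑ j, l j ^ 2 = ∑ a, ∑ b, T a b ^ 2 := by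
  have hT : Tᵀ = T := by
    rw [h.eig]; simp [Matrix.mul_assoc]
  calc ∑ j, l j ^ 2 = ∑ j, V.col j ⬝ᵥ ((T * T) *ᵥ V.col j) := by
        refine Finset.sum_congr rfl fun j _ => ?_
        rw [← Matrix.mulVec_mulVec, h.mulVec_col, Matrix.mulVec_smul, dotProduct_smul,
          h.col_dotProduct_mulVec_col, smul_eq_mul, sq]
    _ = (T * Tᵀ).trace := by rw [h.sum_col_dotProduct_mulVec_col, hT]
    _ = ∑ a, ∑ b, T a b ^ 2 := by simp [Matrix.trace, Matrix.mul_apply, sq]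

end IsAdapted

/-! ### Toeplitz matrices of even functions -/

/-- The uniform probability measure on the circle, represented by the interval `(-π, π]`. -/
noncomputable def circ : Measure ℝ := ProbabilityTheory.cond volume (Set.Ioc (-Real.pi) Real.pi)

lemma circ_eq_smul : circ =
    ENNReal.ofReal (1 / (2 * Real.pi)) • volume.restrict (Set.Ioc (-Real.pi) Real.pi) := by
  rw [circ, ProbabilityTheory.cond, Real.volume_Ioc, sub_neg_eq_add, ← two_mul, one_div,
    ENNReal.ofReal_inv_of_pos Real.two_pi_pos]

instance : IsProbabilityMeasure circ :=
  cond_isProbabilityMeasure_of_finite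
    (by simp [Real.pi_pos]) (by simp)

lemma integral_circ {E : Type*} [NormedAddCommGroup E] [NormedSpace ℝ E] (g : ℝ → E) :
    ∫ x, g x ∂circ = (1 / (2 * Real.pi)) • ∫ x in (-Real.pi)..Real.pi, g x := by
  rw [circ_eq_smul, integral_smul_measure,
    intervalIntegral.integral_of_le (neg_le_self Real.pi_pos.le),
    ENNReal.toReal_ofReal (by positivity)]

lemma integral_circ_eq_zero_of_odd {h : ℝ → ℝ} (hh : Function.Odd h) : ∫ x, h x ∂circ = 0 := by
  have hneg : ∫ x in (-Real.pi)..Real.pi, h (-x) = ∫ x in (-Real.pi)..Real.pi, h x := by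
    rw [intervalIntegral.integral_comp_neg, neg_neg]
  simp only [hh _, intervalIntegral.integral_neg] at hneg
  rw [integral_circ, self_eq_neg.mp hneg.symm, smul_zero]

lemma fourierCoef_eq_integral_circ (f : ℝ → ℂ) (k : ℤ) :
    fourierCoef f k = ∫ x, f x * Complex.exp (-Complex.I * k * x) ∂circ := by
  rw [integral_circ, fourierCoef, Complex.real_smul]
  push_cast
  rfl

lemma fourierCoeffOn_eq_fourierCoef (f : ℝ → ℂ) (k : ℤ) :
    fourierCoeffOn (neg_lt_self Real.pi_pos) f k = fourierCoef f k := by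
  rw [fourierCoeffOn_eq_integral, fourierCoef, Complex.real_smul]
  congr 1
  · push_cast
    ring
  refine intervalIntegral.integral_congr fun x _ => ?_
  have hpi : (Real.pi : ℂ) ≠ 0 := Complex.ofReal_ne_zero.mpr Real.pi_ne_zero
  simp only [smul_eq_mul, fourier_coe_apply]
  rw [mul_comm]
  congr 2
  push_cast
  field_simp
  ring

/-- The `m`-th cosine coefficient `(2π)⁻¹ ∫ g(x) cos(mx) dx`, which for even `g` is the
`m`-th Fourier coefficient. -/
noncomputable def cosCoef (g : ℝ → ℝ) (m : ℤ) : ℝ := ∫ x, g x * Real.cos (m * x) ∂circ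

lemma cosCoef_zero (g : ℝ → ℝ) : cosCoef g 0 = ∫ x, g x ∂circ := by
  simp [cosCoef]

lemma cosCoef_neg (g : ℝ → ℝ) (m : ℤ) : cosCoef g (-m) = cosCoef g m := by
  simp [cosCoef]

lemma integrable_mul_cos {μ : Measure ℝ} {g : ℝ → ℝ} (hg : Integrable g μ) (c : ℝ) :
    Integrable (fun x => g x * Real.cos (c * x)) μ :=
  hg.mul_bdd (c := 1) (by fun_prop) (ae_of_all _ fun _ => Real.abs_cos_le_one _)

lemma integrable_mul_sin {μ : Measure ℝ} {g : ℝ → ℝ} (hg : Integrable g μ) (c : ℝ) :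
    Integrable (fun x => g x * Real.sin (c * x)) μ :=
  hg.mul_bdd (c := 1) (by fun_prop) (ae_of_all _ fun _ => Real.abs_sin_le_one _)

lemma fourierCoef_ofReal_of_even {g : ℝ → ℝ} (heven : Function.Even g) (hg : Integrable g circ)
    (m : ℤ) : fourierCoef (fun t => (g t : ℂ)) m = cosCoef g m := by
  have hexp (x : ℝ) : (g x : ℂ) * Complex.exp (-Complex.I * m * x) =
      ((g x * Real.cos (m * x) : ℝ) : ℂ) - ((g x * Real.sin (m * x) : ℝ) : ℂ) * Complex.I := by
    rw [show -Complex.I * m * x = ((-(m * x) : ℝ) : ℂ) * Complex.I by push_cast; ring,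
      Complex.exp_mul_I, ← Complex.ofReal_cos, ← Complex.ofReal_sin, Real.cos_neg, Real.sin_neg]
    push_cast
    ring
  have hodd : Function.Odd fun x => g x * Real.sin (m * x) := fun x => by
    simp only [heven x, mul_neg, Real.sin_neg]
  simp_rw [fourierCoef_eq_integral_circ, hexp]
  rw [integral_sub (integrable_mul_cos hg m).ofReal ((integrable_mul_sin hg m).ofReal.mul_const _),
    integral_mul_const, integral_complex_ofReal, integral_complex_ofReal,
    integral_circ_eq_zero_of_odd hodd, Complex.ofReal_zero, zero_mul, sub_zero, cosCoef]

lemma hasSum_sq_cosCoef {g : ℝ → ℝ} (heven : Function.Even g) (hg : MemLp g 2 circ) :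
    HasSum (fun m : ℤ => cosCoef g m ^ 2) (∫ x, g x ^ 2 ∂circ) := by
  have hL2 : MemLp (fun x => (g x : ℂ)) 2 (volume.restrict (Set.Ioc (-Real.pi) Real.pi)) := by
    have hvol : volume.restrict (Set.Ioc (-Real.pi) Real.pi) =
        ENNReal.ofReal (2 * Real.pi) • circ := by
      rw [circ_eq_smul, smul_smul, ← ENNReal.ofReal_mul (by positivity),
        mul_one_div_cancel Real.two_pi_pos.ne', ENNReal.ofReal_one, one_smul]
    rw [hvol]
    exact hg.ofReal.smul_measure ENNReal.ofReal_ne_top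
  convert hasSum_sq_fourierCoeffOn (neg_lt_self Real.pi_pos) hL2 using 1
  · ext m
    rw [fourierCoeffOn_eq_fourierCoef,
      fourierCoef_ofReal_of_even heven (hg.integrable one_le_two), Complex.norm_real,
      Real.norm_eq_abs, sq_abs]
  · rw [integral_circ, sub_neg_eq_add, ← two_mul, one_div]
    simp only [Complex.norm_real, Real.norm_eq_abs, sq_abs]

/-- The Toeplitz matrix of an even function, written with real cosine coefficients. -/
noncomputable def toep (g : ℝ → ℝ) (n : ℕ) : Matrix (Fin n) (Fin n) ℝ :=
  Matrix.of fun i j => cosCoef g ((i : ℤ) - (j : ℤ))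

lemma toeplitzR_ofReal_of_even {g : ℝ → ℝ} (heven : Function.Even g) (hg : Integrable g circ)
    (n : ℕ) : toeplitzR (fun t => (g t : ℂ)) n = toep g n := by
  ext i j
  simp only [toeplitzR, toep, of_apply, fourierCoef_ofReal_of_even heven hg, Complex.ofReal_re]

lemma toep_isSymm (g : ℝ → ℝ) (n : ℕ) : (toep g n).IsSymm := by
  ext i j
  rw [transpose_apply, toep, of_apply, of_apply, ← cosCoef_neg, neg_sub]

lemma commute_toep_flipM (g : ℝ → ℝ) (n : ℕ) : Commute (toep g n) (flipM n) := by
  ext i j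
  rw [mul_flipM_apply, flipM_mul_apply, toep, of_apply, of_apply, ← cosCoef_neg]
  congr 1
  simp only [Fin.val_rev]
  omega

lemma trace_toep (g : ℝ → ℝ) (n : ℕ) : (toep g n).trace = n * ∫ x, g x ∂circ := by
  simp [trace, toep, cosCoef_zero]

lemma toep_one (n : ℕ) : toep (fun _ => 1) n = 1 := by
  ext i j
  rcases eq_or_ne i j with rfl | h
  · simp [toep, cosCoef]
  have hm : (((i : ℤ) - (j : ℤ) : ℤ) : ℝ) ≠ 0 := by
    exact Int.cast_ne_zero.mpr (sub_ne_zero.mpr (Nat.cast_injective.ne (Fin.val_ne_of_ne h)))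
  simp only [toep, of_apply, one_apply_ne h, cosCoef, one_mul]
  rw [integral_circ, intervalIntegral.integral_comp_mul_left (fun x => Real.cos x) hm,
    integral_cos, mul_neg, Real.sin_neg, Real.sin_int_mul_pi]
  simp

/-! ### Spectral measures -/

/-- `|∑ₐ vₐ e^{iax}|²`, the density against which `vᵀ T_n(g) v` averages `g`. -/
noncomputable def dens {n : ℕ} (v : Fin n → ℝ) (x : ℝ) : ℝ :=
  (∑ a : Fin n, v a * Real.cos (a * x)) ^ 2 + (∑ a : Fin n, v a * Real.sin (a * x)) ^ 2

lemma dens_nonneg {n : ℕ} (v : Fin n → ℝ) (x : ℝ) : 0 ≤ dens v x := by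
  unfold dens
  positivity

lemma continuous_dens {n : ℕ} (v : Fin n → ℝ) : Continuous (dens v) := by
  unfold dens
  fun_prop

lemma dens_eq_sum_cos {n : ℕ} (v : Fin n → ℝ) (x : ℝ) :
    dens v x = ∑ a : Fin n, ∑ b : Fin n, v a * v b * Real.cos (((a : ℤ) - (b : ℤ) : ℤ) * x) := by
  simp only [dens, sq, Finset.sum_mul_sum, ← Finset.sum_add_distrib]
  refine Finset.sum_congr rfl fun a _ => Finset.sum_congr rfl fun b _ => ?_
  push_cast
  rw [sub_mul, Real.cos_sub]
  ring

lemma dens_le {n : ℕ} (v : Fin n → ℝ) (x : ℝ) : dens v x ≤ ∑ a, ∑ b, |v a * v b| := by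
  rw [dens_eq_sum_cos]
  refine Finset.sum_le_sum fun a _ => Finset.sum_le_sum fun b _ => (le_abs_self _).trans ?_
  rw [abs_mul]
  exact mul_le_of_le_one_right (abs_nonneg _) (Real.abs_cos_le_one _)

/-- The measure on the circle against which the quadratic forms `g ↦ vᵀ T_n(g) v` integrate.
For a unit eigenvector `v` of `T_n(f)` it is a probability measure under which `f` has mean the
eigenvalue. -/
noncomputable def spectralMeasure {n : ℕ} (v : Fin n → ℝ) : Measure ℝ :=
  circ.withDensity fun x => ENNReal.ofReal (dens v x)

lemma spectralMeasure_absolutelyContinuous {n : ℕ} (v : Fin n → ℝ) : spectralMeasure v ≪ circ :=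
  withDensity_absolutelyContinuous _ _

lemma spectralMeasure_le_smul {n : ℕ} (v : Fin n → ℝ) :
    spectralMeasure v ≤ ENNReal.ofReal (∑ a, ∑ b, |v a * v b|) • circ := by
  rw [← withDensity_const]
  exact withDensity_mono (ae_of_all _ fun x => ENNReal.ofReal_le_ofReal (dens_le v x))

lemma memLp_spectralMeasure {n : ℕ} (v : Fin n → ℝ) {g : ℝ → ℝ} {p : ENNReal}
    (hg : MemLp g p circ) : MemLp g p (spectralMeasure v) :=
  hg.of_measure_le_smul ENNReal.ofReal_ne_top (spectralMeasure_le_smul v)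

lemma integral_spectralMeasure {n : ℕ} (v : Fin n → ℝ) {g : ℝ → ℝ} (hg : Integrable g circ) :
    ∫ x, g x ∂spectralMeasure v = v ⬝ᵥ (toep g n *ᵥ v) := by
  have hsum (x : ℝ) : (ENNReal.ofReal (dens v x)).toReal • g x = ∑ a : Fin n, ∑ b : Fin n,
      v a * v b * (g x * Real.cos (((a : ℤ) - (b : ℤ) : ℤ) * x)) := by
    rw [ENNReal.toReal_ofReal (dens_nonneg v x), smul_eq_mul, dens_eq_sum_cos, Finset.sum_mul]
    refine Finset.sum_congr rfl fun a _ => ?_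
    rw [Finset.sum_mul]
    exact Finset.sum_congr rfl fun b _ => by ring
  have hterm (a b : Fin n) : Integrable
      (fun x => v a * v b * (g x * Real.cos (((a : ℤ) - (b : ℤ) : ℤ) * x))) circ :=
    (integrable_mul_cos hg _).const_mul _
  rw [spectralMeasure, integral_withDensity_eq_integral_toReal_smul
    (continuous_dens v).measurable.ennreal_ofReal (ae_of_all _ fun _ => ENNReal.ofReal_lt_top)]
  simp_rw [hsum]
  rw [integral_finsetSum _ fun a _ => integrable_finsetSum _ fun b _ => hterm a b]
  refine Finset.sum_congr rfl fun a _ => ?_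
  rw [integral_finsetSum _ fun b _ => hterm a b, mulVec, dotProduct, Finset.mul_sum]
  refine Finset.sum_congr rfl fun b _ => ?_
  rw [integral_const_mul, toep, of_apply, cosCoef]
  ring

lemma isProbabilityMeasure_spectralMeasure {n : ℕ} {v : Fin n → ℝ} (hv : v ⬝ᵥ v = 1) :
    IsProbabilityMeasure (spectralMeasure v) := by
  have := circ.smul_finite (ENNReal.ofReal_ne_top (r := ∑ a, ∑ b, |v a * v b|))
  have := isFiniteMeasure_of_le _ (spectralMeasure_le_smul v)
  have h := integral_spectralMeasure v (integrable_const (1 : ℝ))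
  rw [toep_one, one_mulVec, hv, integral_const, smul_eq_mul, mul_one] at h
  exact ⟨(ENNReal.toReal_eq_one_iff _).mp h⟩

/-! ### Negligible traces and variances -/

lemma tendsto_sum_sub_div_atTop {h : ℤ → ℝ} {I : ℝ} (hh : HasSum h I) :
    Tendsto (fun n : ℕ => (∑ a : Fin n, ∑ b : Fin n, h ((a : ℤ) - (b : ℤ))) / n) atTop (𝓝 I) := by
  let u : ℕ → ℝ := fun m => ∑ j ∈ Finset.range m, (h j + h (-(j + 1))) + h m
  have hu : Tendsto u atTop (𝓝 I) := by
    have hzero : Tendsto (fun m : ℕ => h m) atTop (𝓝 0) :=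
      (hh.summable.comp_injective Nat.cast_injective).tendsto_atTop_zero
    simpa only [add_zero] using hh.nat_add_neg_add_one.tendsto_sum_nat.add hzero
  have hsum (n : ℕ) : ∑ a : Fin n, ∑ b : Fin n, h ((a : ℤ) - (b : ℤ)) =
      ∑ m ∈ Finset.range n, u m := by
    induction n with
    | zero => simp
    | succ n ih =>
      have hcol : ∑ a : Fin n, h ((a : ℤ) - n) = ∑ j ∈ Finset.range n, h (-(j + 1)) := by
        rw [Finset.sum_range, ← Equiv.sum_comp Fin.revPerm]
        refine Finset.sum_congr rfl fun a _ => congrArg h ?_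
        simp only [Fin.revPerm_apply, Fin.val_rev]
        omega
      have hrow : ∑ b : Fin n, h ((n : ℤ) - b) = ∑ j ∈ Finset.range n, h (j + 1) := by
        rw [Finset.sum_range, ← Equiv.sum_comp Fin.revPerm]
        refine Finset.sum_congr rfl fun a _ => congrArg h ?_
        simp only [Fin.revPerm_apply, Fin.val_rev]
        omega
      have hdiag : ∑ j ∈ Finset.range n, h (j + 1) + h 0 =
          ∑ j ∈ Finset.range n, h j + h n := by
        have := (Finset.sum_range_succ' (fun j : ℕ => h j) n).symm.trans
          (Finset.sum_range_succ (fun j : ℕ => h j) n)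
        simpa using this
      simp only [Fin.sum_univ_castSucc, Fin.val_castSucc, Fin.val_last, Finset.sum_add_distrib,
        hcol, hrow, ih, Finset.sum_range_succ, sub_self, u]
      linarith
  simpa only [hsum, div_eq_inv_mul] using hu.cesaro

lemma isLittleO_mul_sub_sum_sq_toep {g : ℝ → ℝ} (heven : Function.Even g) (hg : MemLp g 2 circ) :
    (fun n : ℕ => n * (∫ x, g x ^ 2 ∂circ) - ∑ a, ∑ b, toep g n a b ^ 2)
      =o[atTop] fun n : ℕ => (n : ℝ) := by
  refine isLittleO_of_tendsto' ?_ ?_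
  · filter_upwards [eventually_gt_atTop 0] with n hn h0
    exact absurd h0 (Nat.cast_ne_zero.mpr hn.ne')
  have h := (tendsto_sum_sub_div_atTop (hasSum_sq_cosCoef heven hg)).const_sub (∫ x, g x ^ 2 ∂circ)
  rw [sub_self] at h
  refine h.congr' ?_
  filter_upwards [eventually_gt_atTop 0] with n hn
  rw [sub_div, mul_div_cancel_left₀ _ (Nat.cast_ne_zero.mpr hn.ne')]
  rfl

lemma isLittleO_natCast_of_sq_le_mul {E A : ℕ → ℝ} (hA : A =o[atTop] fun n : ℕ => (n : ℝ))
    (h : ∀ n : ℕ, E n ^ 2 ≤ n * A n) : E =o[atTop] fun n : ℕ => (n : ℝ) := by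
  refine IsLittleO.of_pow (n := 2) ?_ two_ne_zero
  refine IsBigO.trans_isLittleO (g := fun n : ℕ => n * A n) ?_ ?_
  · refine isBigO_of_le _ fun n => ?_
    simpa only [Real.norm_eq_abs, Pi.pow_apply, abs_sq] using (h n).trans (le_abs_self _)
  · rw [sq]
    exact (isBigO_refl _ _).mul_isLittleO hA

lemma sum_sq_cosCoef_comp_le {ι : Type*} [Fintype ι] {g : ℝ → ℝ} (heven : Function.Even g)
    (hg : MemLp g 2 circ) {e : ι → ℤ} (he : Function.Injective e) :
    ∑ i, cosCoef g (e i) ^ 2 ≤ ∫ x, g x ^ 2 ∂circ := by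
  refine (Finset.sum_map Finset.univ ⟨e, he⟩ fun m => cosCoef g m ^ 2).symm.trans_le ?_
  exact sum_le_hasSum _ (fun _ _ => sq_nonneg _) (hasSum_sq_cosCoef heven hg)

lemma isLittleO_trace_flipM_mul_toep {g : ℝ → ℝ} (heven : Function.Even g)
    (hg : MemLp g 2 circ) :
    (fun n : ℕ => (flipM n * toep g n).trace) =o[atTop] fun n : ℕ => (n : ℝ) := by
  refine isLittleO_natCast_of_sq_le_mul (A := fun _ => ∫ x, g x ^ 2 ∂circ) ?_ fun n => ?_
  · exact isLittleO_const_left.mpr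
      (.inr (tendsto_norm_atTop_atTop.comp tendsto_natCast_atTop_atTop))
  have hinj : Function.Injective fun i : Fin n => (i.rev : ℤ) - i := fun i j hij => by
    simp only [Fin.val_rev] at hij
    omega
  calc (flipM n * toep g n).trace ^ 2
      = (∑ i : Fin n, cosCoef g ((i.rev : ℤ) - i)) ^ 2 := by
        simp only [trace, diag_apply, flipM_mul_apply, toep, of_apply]
    _ ≤ n * ∑ i : Fin n, cosCoef g ((i.rev : ℤ) - i) ^ 2 := by
        simpa using sq_sum_le_card_mul_sum_sq (s := Finset.univ)
          (f := fun i : Fin n => cosCoef g ((i.rev : ℤ) - i))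
    _ ≤ n * ∫ x, g x ^ 2 ∂circ := by
        gcongr
        exact sum_sq_cosCoef_comp_le heven hg hinj

lemma memLp_comp_of_lipschitzWith {Ω : Type*} {mΩ : MeasurableSpace Ω} {μ : Measure Ω}
    [IsFiniteMeasure μ] {X : Ω → ℝ} {p : ENNReal} (hX : MemLp X p μ) {F : ℝ → ℝ} {K : NNReal}
    (hF : LipschitzWith K F) : MemLp (fun ω => F (X ω)) p μ := by
  have hF' : LipschitzWith K fun y => F y - F 0 := by
    simpa using hF.sub (LipschitzWith.const (F 0))
  simpa [Function.comp_def, Pi.add_def] using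
    (hF'.comp_memLp (sub_self _) hX).add (memLp_const (F 0))

lemma sq_integral_abs_sub_le_variance {Ω : Type*} {mΩ : MeasurableSpace Ω} {μ : Measure Ω}
    [IsProbabilityMeasure μ] {X : Ω → ℝ} (hX : MemLp X 2 μ) :
    (∫ ω, |X ω - ∫ ω', X ω' ∂μ| ∂μ) ^ 2 ≤ Var[X; μ] := by
  have habs : MemLp (fun ω => |X ω - ∫ ω', X ω' ∂μ|) 2 μ := (hX.sub (memLp_const _)).norm
  have h := variance_nonneg (fun ω => |X ω - ∫ ω', X ω' ∂μ|) μ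
  rw [variance_eq_sub habs] at h
  simpa [variance_eq_integral hX.aemeasurable] using h

lemma abs_integral_comp_sub_le {Ω : Type*} {mΩ : MeasurableSpace Ω} {μ : Measure Ω}
    [IsProbabilityMeasure μ] {X : Ω → ℝ} (hX : MemLp X 2 μ) {F : ℝ → ℝ} {K : NNReal}
    (hF : LipschitzWith K F) :
    |∫ ω, F (X ω) ∂μ - F (∫ ω, X ω ∂μ)| ≤ K * √Var[X; μ] := by
  set m := ∫ ω, X ω ∂μ
  have hFX : Integrable (fun ω => F (X ω)) μ :=
    (memLp_comp_of_lipschitzWith hX hF).integrable one_le_two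
  have habs : Integrable (fun ω => |X ω - m|) μ :=
    ((hX.integrable one_le_two).sub (integrable_const m)).abs
  calc |∫ ω, F (X ω) ∂μ - F m| = |∫ ω, (F (X ω) - F m) ∂μ| := by
        rw [integral_sub hFX (integrable_const _), integral_const, probReal_univ, one_smul]
    _ ≤ ∫ ω, |F (X ω) - F m| ∂μ := abs_integral_le_integral_abs
    _ ≤ ∫ ω, K * |X ω - m| ∂μ :=
        integral_mono (hFX.sub (integrable_const _)).abs (habs.const_mul _)
          fun ω => hF.norm_sub_le (X ω) m
    _ = K * ∫ ω, |X ω - m| ∂μ := integral_const_mul _ _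
    _ ≤ K * √Var[X; μ] := by
        gcongr
        exact Real.le_sqrt_of_sq_le (sq_integral_abs_sub_le_variance hX)

/-! ### Distribution of the eigenvalues of each parity -/

lemma IsAdapted.integral_spectralMeasure_eq {f : ℝ → ℝ} {n : ℕ} {V : Matrix (Fin n) (Fin n) ℝ}
    {l : Fin n → ℝ} (h : IsAdapted (toep f n) V l) (hf : Integrable f circ) (j : Fin n) :
    ∫ x, f x ∂spectralMeasure (V.col j) = l j := by
  rw [integral_spectralMeasure _ hf, h.col_dotProduct_mulVec_col]

lemma IsAdapted.sum_variance {f : ℝ → ℝ} {n : ℕ} {V : Matrix (Fin n) (Fin n) ℝ} {l : Fin n → ℝ}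
    (h : IsAdapted (toep f n) V l) (hf : MemLp f 2 circ) :
    ∑ j, Var[f; spectralMeasure (V.col j)] =
      n * (∫ x, f x ^ 2 ∂circ) - ∑ a, ∑ b, toep f n a b ^ 2 := by
  have hvar (j : Fin n) : Var[f; spectralMeasure (V.col j)] =
      V.col j ⬝ᵥ (toep (fun x => f x ^ 2) n *ᵥ V.col j) - l j ^ 2 := by
    have := isProbabilityMeasure_spectralMeasure (h.col_dotProduct_self j)
    rw [variance_eq_sub (memLp_spectralMeasure _ hf),
      h.integral_spectralMeasure_eq (hf.integrable one_le_two)]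
    exact congrArg (· - l j ^ 2) (integral_spectralMeasure _ hf.integrable_sq)
  simp_rw [hvar]
  rw [Finset.sum_sub_distrib, h.sum_col_dotProduct_mulVec_col, h.sum_sq_eigenvalues, trace_toep]

lemma isLittleO_sum_filter_altSign_sub {f : ℝ → ℝ} (heven : Function.Even f)
    (hf : MemLp f 2 circ) {V : ∀ n, Matrix (Fin n) (Fin n) ℝ} {l : ∀ n, Fin n → ℝ}
    (h : ∀ n, IsAdapted (toep f n) (V n) (l n)) {F : ℝ → ℝ} {K : NNReal}
    (hF : LipschitzWith K F) (s : ℤˣ) :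
    (fun n : ℕ => ∑ j with altSign j = s, F (l n j) - n / 2 * ∫ x, F (f x) ∂circ)
      =o[atTop] fun n : ℕ => (n : ℝ) := by
  have hFf : MemLp (fun x => F (f x)) 2 circ := memLp_comp_of_lipschitzWith hf hF
  have hFeven : Function.Even fun x => F (f x) := fun x => congrArg F (heven x)
  let m (n : ℕ) (j : Fin n) : ℝ := ∫ x, F (f x) ∂spectralMeasure ((V n).col j)
  have hmean : (fun n : ℕ => ∑ j : Fin n with altSign j = s, m n j - n / 2 * ∫ x, F (f x) ∂circ)
      =o[atTop] fun n : ℕ => (n : ℝ) := by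
    have htrace := isLittleO_trace_flipM_mul_toep hFeven hFf
    refine (htrace.const_mul_left (((s : ℤ) : ℝ) / 2)).congr_left fun n => ?_
    simp only [m, integral_spectralMeasure _ (hFf.integrable one_le_two)]
    rw [(h n).sum_filter_altSign_col_dotProduct_mulVec_col, trace_toep]
    ring
  have hdev : (fun n : ℕ => ∑ j : Fin n with altSign j = s, (F (l n j) - m n j))
      =o[atTop] fun n : ℕ => (n : ℝ) := by
    refine isLittleO_natCast_of_sq_le_mul
      ((isLittleO_mul_sub_sum_sq_toep heven hf).const_mul_left ((K : ℝ) ^ 2)) fun n => ?_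
    have hdist (j : Fin n) : (F (l n j) - m n j) ^ 2 ≤
        (K : ℝ) ^ 2 * Var[f; spectralMeasure ((V n).col j)] := by
      have := isProbabilityMeasure_spectralMeasure ((h n).col_dotProduct_self j)
      rw [← (h n).integral_spectralMeasure_eq (hf.integrable one_le_two), ← sq_abs, abs_sub_comm,
        ← Real.sq_sqrt (variance_nonneg f _), ← mul_pow]
      gcongr
      exact abs_integral_comp_sub_le (memLp_spectralMeasure _ hf) hF
    calc (∑ j : Fin n with altSign j = s, (F (l n j) - m n j)) ^ 2
        ≤ (Finset.univ.filter fun j : Fin n => altSign j = s).card *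
            ∑ j : Fin n with altSign j = s, (F (l n j) - m n j) ^ 2 := sq_sum_le_card_mul_sum_sq
      _ ≤ n * ∑ j, (F (l n j) - m n j) ^ 2 := by
        gcongr
        · exact (Finset.card_le_univ _).trans_eq (Fintype.card_fin n)
        · exact Finset.filter_subset _ _
      _ ≤ n * ∑ j, (K : ℝ) ^ 2 * Var[f; spectralMeasure ((V n).col j)] := by
        gcongr with j
        exact hdist j
      _ = _ := by rw [← Finset.mul_sum, (h n).sum_variance hf]
  refine (hdev.add hmean).congr_left fun n => ?_
  rw [Finset.sum_sub_distrib]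
  ring

lemma exists_lipschitzWith_lt_integral {α : Type*} [PseudoEMetricSpace α] [MeasurableSpace α]
    [OpensMeasurableSpace α] (ν : Measure α) [IsFiniteMeasure ν] {U : Set α} (hU : IsOpen U)
    {ε : ℝ} (hε : 0 < ε) :
    ∃ (K : NNReal) (F : α → ℝ), LipschitzWith K F ∧ (∀ y, F y ≤ U.indicator 1 y) ∧
      ν.real U - ε < ∫ y, F y ∂ν := by
  obtain ⟨δ, -, hδ, hδ0⟩ := exists_seq_strictAnti_tendsto (0 : ℝ)
  have hlim := (tendsto_integral_thickenedIndicator_of_isClosed ν hU.isClosed_compl hδ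
    hδ0).const_sub (ν.real Set.univ)
  rw [measureReal_compl hU.measurableSet, sub_sub_cancel] at hlim
  obtain ⟨k, hk⟩ := (hlim.eventually_const_lt (sub_lt_self _ hε)).exists
  refine ⟨_, fun y => 1 - thickenedIndicator (hδ k) Uᶜ y, (LipschitzWith.const (1 : ℝ)).sub
    (lipschitzWith_thickenedIndicator (hδ k) Uᶜ), fun y => ?_, ?_⟩
  · by_cases hy : y ∈ U
    · simp [hy]
    · simp [hy, thickenedIndicator_one (hδ k) Uᶜ hy]
  · rwa [integral_sub (integrable_const (1 : ℝ)) (integrable_thickenedIndicator _ (hδ k)),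
      integral_const, smul_eq_mul, mul_one]

lemma eventually_le_ncard_altSign_eq_and_mem {f : ℝ → ℝ} (heven : Function.Even f)
    (hf : MemLp f 2 circ) {V : ∀ n, Matrix (Fin n) (Fin n) ℝ} {l : ∀ n, Fin n → ℝ}
    (h : ∀ n, IsAdapted (toep f n) (V n) (l n)) {U : Set ℝ} (hU : IsOpen U) (s : ℤˣ)
    {δ : ℝ} (hδ : 0 < δ) : ∀ᶠ n : ℕ in atTop,
      n * (circ.real (f ⁻¹' U) / 2 - δ) ≤ {j | altSign j = s ∧ l n j ∈ U}.ncard := by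
  classical
  obtain ⟨K, F, hF, hFU, hFint⟩ := exists_lipschitzWith_lt_integral (circ.map f) hU hδ
  rw [integral_map hf.1.aemeasurable hF.continuous.aestronglyMeasurable,
    map_measureReal_apply_of_aemeasurable hf.1.aemeasurable hU.measurableSet] at hFint
  filter_upwards [(isLittleO_sum_filter_altSign_sub heven hf h hF s).bound (half_pos hδ)] with n hn
  rw [Real.norm_eq_abs, Real.norm_natCast] at hn
  calc n * (circ.real (f ⁻¹' U) / 2 - δ)
      = n / 2 * (circ.real (f ⁻¹' U) - δ) - δ / 2 * n := by ring
    _ ≤ n / 2 * ∫ x, F (f x) ∂circ - δ / 2 * n := by gcongr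
    _ ≤ ∑ j with altSign j = s, F (l n j) := by linarith [neg_le_of_abs_le hn]
    _ ≤ ∑ j with altSign j = s, U.indicator 1 (l n j) := Finset.sum_le_sum fun j _ => hFU _
    _ = {j | altSign j = s ∧ l n j ∈ U}.ncard := by
        simp [Set.ncard_eq_toFinset_card', Set.indicator_apply, Finset.filter_filter]

/-! ### Regular points of the symbol -/

lemma isOpen_image_of_not_isLocalExtr {α β : Type*} [TopologicalSpace α] [LocallyConnectedSpace α]
    [TopologicalSpace β] [LinearOrder β] [OrderClosedTopology β] {f : α → β} {O : Set α}
    (hO : IsOpen O) (hc : ∀ x ∈ O, ContinuousAt f x) (hmax : ∀ x ∈ O, ¬ IsLocalMax f x)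
    (hmin : ∀ x ∈ O, ¬ IsLocalMin f x) : IsOpen (f '' O) := by
  rw [isOpen_iff_mem_nhds]
  rintro _ ⟨x, hx, rfl⟩
  obtain ⟨W, hWO, hW, hxW, hconn⟩ :=
    locallyConnectedSpace_iff_subsets_isOpen_isConnected.mp ‹_› x O (hO.mem_nhds hx)
  have hord : (f '' W).OrdConnected := (hconn.isPreconnected.image f fun y hy =>
    (hc y (hWO hy)).continuousWithinAt).ordConnected
  obtain ⟨y, hy, hxy⟩ : ∃ y ∈ W, f x < f y := by
    by_contra! h
    exact hmax x hx (mem_of_superset (hW.mem_nhds hxW) h)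
  obtain ⟨z, hz, hzx⟩ : ∃ z ∈ W, f z < f x := by
    by_contra! h
    exact hmin x hx (mem_of_superset (hW.mem_nhds hxW) h)
  exact mem_of_superset (Icc_mem_nhds hzx hxy)
    ((hord.out ⟨z, hz, rfl⟩ ⟨y, hy, rfl⟩).trans (Set.image_mono hWO))

/-- The points of `(0, π)` where `f` is discontinuous or has a weak local extremum. -/
def singularSet (f : ℝ → ℝ) : Set ℝ :=
  {x ∈ Set.Ioo 0 Real.pi | ¬ ContinuousAt f x ∨ IsLocalMax f x ∨ IsLocalMin f x}

/-- The points of `(0, π)` near which `f` is continuous without local extrema, hence open. -/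
def regularSet (f : ℝ → ℝ) : Set ℝ := Set.Ioo 0 Real.pi \ closure (singularSet f)

lemma finite_singularSet {f : ℝ → ℝ}
    (hmax : {x ∈ Set.Icc (-Real.pi) Real.pi |
      IsLocalMaxOn f (Set.Icc (-Real.pi) Real.pi) x}.Finite)
    (hmin : {x ∈ Set.Icc (-Real.pi) Real.pi |
      IsLocalMinOn f (Set.Icc (-Real.pi) Real.pi) x}.Finite)
    (hdisc : {x ∈ Set.Icc (-Real.pi) Real.pi |
      ¬ ContinuousWithinAt f (Set.Icc (-Real.pi) Real.pi) x}.Finite) :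
    (singularSet f).Finite := by
  refine ((hmax.union hmin).union hdisc).subset ?_
  rintro x ⟨⟨hx0, hxpi⟩, hx⟩
  have hIcc : Set.Icc (-Real.pi) Real.pi ∈ 𝓝 x := Icc_mem_nhds (by linarith) hxpi
  have hmem := mem_of_mem_nhds hIcc
  rcases hx with hx | hx | hx
  · exact Or.inr ⟨hmem, mt (·.continuousAt hIcc) hx⟩
  · exact Or.inl (Or.inl ⟨hmem, hx.on _⟩)
  · exact Or.inl (Or.inr ⟨hmem, hx.on _⟩)

lemma isOpen_regularSet (f : ℝ → ℝ) : IsOpen (regularSet f) :=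
  isOpen_Ioo.sdiff isClosed_closure

lemma regularSet_subset_Ioo (f : ℝ → ℝ) : regularSet f ⊆ Set.Ioo 0 Real.pi := Set.sdiff_subset

lemma not_singular_of_mem_regularSet {f : ℝ → ℝ} {x : ℝ} (hx : x ∈ regularSet f) :
    ContinuousAt f x ∧ ¬ IsLocalMax f x ∧ ¬ IsLocalMin f x := by
  have hns : ¬ (¬ ContinuousAt f x ∨ IsLocalMax f x ∨ IsLocalMin f x) := fun h =>
    hx.2 (subset_closure ⟨hx.1, h⟩)
  tauto

lemma isOpen_image_of_subset_regularSet {f : ℝ → ℝ} {O : Set ℝ} (hO : IsOpen O)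
    (hOf : O ⊆ regularSet f) : IsOpen (f '' O) :=
  isOpen_image_of_not_isLocalExtr hO (fun _ hx => (not_singular_of_mem_regularSet (hOf hx)).1)
    (fun _ hx => (not_singular_of_mem_regularSet (hOf hx)).2.1)
    (fun _ hx => (not_singular_of_mem_regularSet (hOf hx)).2.2)

lemma mem_Ioo_of_mem_regularSet {f : ℝ → ℝ} (hbdd : Bornology.IsBounded (f '' Set.Icc 0 Real.pi))
    {x : ℝ} (hx : x ∈ regularSet f) :
    f x ∈ Set.Ioo (sInf (f '' Set.Icc 0 Real.pi)) (sSup (f '' Set.Icc 0 Real.pi)) := by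
  have hsub : f '' regularSet f ⊆
      Set.Icc (sInf (f '' Set.Icc 0 Real.pi)) (sSup (f '' Set.Icc 0 Real.pi)) := by
    rintro _ ⟨y, hy, rfl⟩
    have hfy := Set.mem_image_of_mem f (Set.Ioo_subset_Icc_self hy.1)
    exact ⟨csInf_le hbdd.bddBelow hfy, le_csSup hbdd.bddAbove hfy⟩
  rw [← interior_Icc]
  exact interior_maximal hsub
    (isOpen_image_of_subset_regularSet (isOpen_regularSet f) subset_rfl) ⟨x, hx, rfl⟩

lemma apply_abs_of_even {β : Type*} {f : ℝ → β} (heven : Function.Even f) (x : ℝ) :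
    f |x| = f x := by
  rcases abs_choice x with hx | hx
  · rw [hx]
  · rw [hx, heven]

lemma circ_real_preimage_abs {A : Set ℝ} (hA : MeasurableSet A) (hApi : A ⊆ Set.Ioo 0 Real.pi) :
    circ.real (abs ⁻¹' A) = volume.real A / Real.pi := by
  have hsplit : abs ⁻¹' A = A ∪ -A := by
    ext x
    rcases abs_cases x with ⟨hx, hsign⟩ | ⟨hx, hsign⟩
    · have : -x ∉ A := fun h => by linarith [(hApi h).1]
      simp [hx, this]
    · have : x ∉ A := fun h => by linarith [(hApi h).1]
      simp [hx, this]
  have hdisj : Disjoint A (-A) :=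
    Set.disjoint_left.mpr fun x hx hx' => by linarith [(hApi hx).1, (hApi hx').1]
  have hsub : A ∪ -A ⊆ Set.Ioc (-Real.pi) Real.pi := by
    rintro x (hx | hx) <;> constructor <;> linarith [(hApi hx).1, (hApi hx).2]
  have hfin : volume A ≠ ⊤ := measure_ne_top_of_subset hApi (by simp)
  rw [hsplit, circ_eq_smul, measureReal_ennreal_smul_apply,
    measureReal_restrict_apply (hA.union hA.neg), Set.inter_eq_left.mpr hsub,
    measureReal_union hdisj hA.neg hfin (by rwa [Measure.measure_neg]), measureReal_def _ (-A),
    Measure.measure_neg, ← measureReal_def, ENNReal.toReal_ofReal (by positivity)]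
  field_simp
  ring

lemma le_circ_real_preimage_image {f : ℝ → ℝ} (heven : Function.Even f) {A : Set ℝ}
    (hA : MeasurableSet A) (hApi : A ⊆ Set.Ioo 0 Real.pi) :
    volume.real A / Real.pi ≤ circ.real (f ⁻¹' (f '' A)) := by
  rw [← circ_real_preimage_abs hA hApi]
  exact measureReal_mono fun x hx => ⟨|x|, hx, apply_abs_of_even heven x⟩

lemma ae_circ_abs_mem_regularSet {f : ℝ → ℝ} (hsing : volume (closure (singularSet f)) = 0) :
    ∀ᵐ x ∂circ, |x| ∈ regularSet f := by
  have hmeas := (isOpen_regularSet f).measurableSet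
  refine (mem_ae_iff_prob_eq_one (continuous_abs.measurable hmeas)).mpr ?_
  rw [← ENNReal.toReal_eq_one_iff, ← measureReal_def,
    circ_real_preimage_abs hmeas (regularSet_subset_Ioo f), regularSet, measureReal_def,
    measure_sdiff_null hsing, Real.volume_Ioo, sub_zero, ENNReal.toReal_ofReal Real.pi_pos.le,
    div_self Real.pi_ne_zero]

lemma memLp_circ {f : ℝ → ℝ} (heven : Function.Even f)
    (hbdd : Bornology.IsBounded (f '' Set.Icc 0 Real.pi))
    (hsing : volume (closure (singularSet f)) = 0) (p : ENNReal) : MemLp f p circ := by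
  have hae := ae_circ_abs_mem_regularSet hsing
  have hopen : IsOpen (abs ⁻¹' regularSet f) := (isOpen_regularSet f).preimage continuous_abs
  have hcont : ContinuousOn f (abs ⁻¹' regularSet f) := by
    refine ContinuousOn.congr (f := fun x => f |x|) (fun x hx => ?_) fun x _ =>
      (apply_abs_of_even heven x).symm
    have hfx := (not_singular_of_mem_regularSet hx).1
    exact (hfx.comp continuous_abs.continuousAt).continuousWithinAt
  have hmeas := hcont.aestronglyMeasurable (μ := circ) hopen.measurableSet
  rw [Measure.restrict_eq_self_of_ae_mem (s := abs ⁻¹' regularSet f) hae] at hmeas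
  obtain ⟨C, hC⟩ := hbdd.exists_norm_le
  refine MemLp.of_bound hmeas C (hae.mono fun x hx => ?_)
  rw [← apply_abs_of_even heven]
  exact hC _ ⟨|x|, Set.Ioo_subset_Icc_self hx.1, rfl⟩

lemma integral_mem_Ioo {Ω : Type*} [MeasurableSpace Ω] {μ : Measure Ω} [IsProbabilityMeasure μ]
    {g : Ω → ℝ} (hg : Integrable g μ) {a b : ℝ} (hab : ∀ᵐ ω ∂μ, g ω ∈ Set.Ioo a b) :
    ∫ ω, g ω ∂μ ∈ Set.Ioo a b := by
  obtain ⟨ω, hω, hle⟩ := exists_notMem_null_le_integral hg hab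
  obtain ⟨ω', hω', hge⟩ := exists_notMem_null_integral_le hg hab
  exact ⟨(not_not.mp hω).1.trans_le hle, hge.trans_lt (not_not.mp hω').2⟩

lemma IsAdapted.eigenvalue_mem_Ioo {f : ℝ → ℝ} {n : ℕ} {V : Matrix (Fin n) (Fin n) ℝ}
    {l : Fin n → ℝ} (h : IsAdapted (toep f n) V l) (hf : Integrable f circ) {a b : ℝ}
    (hab : ∀ᵐ x ∂circ, f x ∈ Set.Ioo a b) (j : Fin n) : l j ∈ Set.Ioo a b := by
  have := isProbabilityMeasure_spectralMeasure (h.col_dotProduct_self j)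
  rw [← h.integral_spectralMeasure_eq hf j]
  exact integral_mem_Ioo (memLp_one_iff_integrable.mp
    (memLp_spectralMeasure _ (memLp_one_iff_integrable.mpr hf)))
    ((spectralMeasure_absolutelyContinuous _).ae_le hab)

/-! ### A perfect matching from approximate counts -/

section Matching

variable {α V : Type*}

/-- The vertices of `C` together with all their neighbours in `G`. -/
def closedNbhd (G : SimpleGraph V) (C : Set V) : Set V := {w | ∃ v ∈ C, v = w ∨ G.Adj v w}

lemma subset_closedNbhd (G : SimpleGraph V) (C : Set V) : C ⊆ closedNbhd G C :=
  fun v hv => ⟨v, hv, Or.inl rfl⟩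

lemma ncard_lt_ncard_closedNbhd [Finite V] {G : SimpleGraph V} (hG : G.Preconnected) {C : Set V}
    (hC : C.Nonempty) (hne : closedNbhd G C ≠ Set.univ) : C.ncard < (closedNbhd G C).ncard := by
  obtain ⟨v, hv⟩ := hC
  obtain ⟨w, hw⟩ := (Set.ne_univ_iff_exists_notMem _).mp hne
  obtain ⟨p⟩ := hG v w
  obtain ⟨d, -, hd, hd'⟩ :=
    p.exists_boundary_dart C hv fun hwC => hw (subset_closedNbhd G C hwC)
  exact Set.ncard_lt_ncard (Set.ssubset_iff_of_subset (subset_closedNbhd G C) |>.mpr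
    ⟨d.snd, ⟨d.fst, hd, Or.inr d.adj⟩, hd'⟩)

lemma ncard_le_ncard_image_mul {A : Set α} (hA : A.Finite) (c : α → V) {a : ℝ}
    (hfiber : ∀ v, ({i ∈ A | c i = v}.ncard : ℝ) ≤ a) : (A.ncard : ℝ) ≤ (c '' A).ncard * a := by
  classical
  lift A to Finset α using hA
  have hcard : A.card = ∑ v ∈ A.image c, (A.filter (c · = v)).card :=
    Finset.card_eq_sum_card_image c A
  rw [Set.ncard_coe_finset, ← Finset.coe_image, Set.ncard_coe_finset, hcard, Nat.cast_sum,
    ← nsmul_eq_mul]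
  refine Finset.sum_le_card_nsmul _ _ _ fun v _ => ?_
  rw [← Set.ncard_coe_finset, Finset.coe_filter]
  exact hfiber v

-- If the classes occupied by a set do not have full closed neighbourhood, then this neighbourhood
-- contains one class more, which outweighs the errors in the counts.
lemma exists_injective_of_ncard_le [Finite α] [Fintype V] {G : SimpleGraph V} (hG : G.Preconnected)
    {c : α → V} {r : α → V → Prop} (hr : ∀ j, ∃ v, r j v) {a e e' : ℝ} (he : 0 ≤ e)
    (hae : Fintype.card V * e + e' ≤ a) (hupper : ∀ v, ({i | c i = v}.ncard : ℝ) ≤ a + e)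
    (hlower : ∀ C : Set V, C.ncard * a - e' ≤ ({j | ∃ v ∈ C, r j v}.ncard : ℝ)) :
    ∃ σ : α → α, σ.Injective ∧ ∀ i, ∃ v, (c i = v ∨ G.Adj (c i) v) ∧ r (σ i) v := by
  classical
  have := Fintype.ofFinite α
  refine (Fintype.all_card_le_filter_rel_iff_exists_injective
    fun i j => ∃ v, (c i = v ∨ G.Adj (c i) v) ∧ r j v).mp fun A => ?_
  rcases A.eq_empty_or_nonempty with rfl | hA
  · exact Nat.zero_le _
  rw [← Set.ncard_coe_finset A, ← Set.ncard_coe_finset]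
  set N := closedNbhd G (c '' A)
  have hsub : {j | ∃ v ∈ N, r j v} ⊆
      ({j | ∃ i ∈ A, ∃ v, (c i = v ∨ G.Adj (c i) v) ∧ r j v} : Finset α) := by
    rintro j ⟨v, ⟨_, ⟨i, hi, rfl⟩, hiv⟩, hjv⟩
    exact Finset.mem_coe.mpr (Finset.mem_filter_univ _ |>.mpr ⟨i, hi, v, hiv, hjv⟩)
  refine le_trans ?_ (Set.ncard_le_ncard hsub)
  by_cases hfull : N = Set.univ
  · simp only [hfull, Set.mem_univ, true_and, hr]
    exact Set.ncard_le_ncard (Set.subset_univ _)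
  have hgrow : ((c '' A).ncard : ℝ) + 1 ≤ N.ncard := by
    rw [← Nat.cast_succ, Nat.cast_le, Nat.succ_le_iff]
    exact ncard_lt_ncard_closedNbhd hG (hA.to_set.image c) hfull
  have hbound : ((c '' A).ncard : ℝ) ≤ Fintype.card V := by
    rw [Nat.cast_le, ← Nat.card_eq_fintype_card]
    exact Set.ncard_le_card _
  have ha : 0 ≤ a := by
    have hempty := hlower ∅
    simp only [Set.ncard_empty, Set.mem_empty_iff_false, false_and, exists_false, Set.ofPred_false,
      Nat.cast_zero, zero_mul, zero_sub] at hempty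
    exact le_trans (add_nonneg (by positivity) (neg_nonpos.mp hempty)) hae
  rw [← Nat.cast_le (α := ℝ)]
  calc ((A : Set α).ncard : ℝ)
      ≤ (c '' A).ncard * (a + e) := ncard_le_ncard_image_mul A.finite_toSet c fun v =>
        (Nat.cast_le.mpr (Set.ncard_le_ncard fun _ hi => hi.2)).trans (hupper v)
    _ ≤ ((c '' A).ncard + 1) * a - e' := by nlinarith
    _ ≤ N.ncard * a - e' := by gcongr
    _ ≤ _ := hlower N

lemma exists_perm_of_ncard_le [Finite α] [Fintype V] {G : SimpleGraph V} (hG : G.Preconnected)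
    {κ : Type*} (χ : α → κ) {c : α → V} {r : α → V → Prop} (hr : ∀ j, ∃ v, r j v) {a e e' : ℝ}
    (he : 0 ≤ e) (hae : Fintype.card V * e + e' ≤ a)
    (hupper : ∀ s v, ({i | χ i = s ∧ c i = v}.ncard : ℝ) ≤ a + e)
    (hlower : ∀ s (C : Set V), C.ncard * a - e' ≤ ({j | χ j = s ∧ ∃ v ∈ C, r j v}.ncard : ℝ)) :
    ∃ σ : Equiv.Perm α, ∀ i, χ (σ i) = χ i ∧ ∃ v, (c i = v ∨ G.Adj (c i) v) ∧ r (σ i) v := by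
  have hncard (s : κ) (p : α → Prop) :
      {i : {i // χ i = s} | p i}.ncard = {i | χ i = s ∧ p i}.ncard := by
    rw [← Set.ncard_image_of_injective _ Subtype.val_injective]
    congr 1
    ext i
    simp [and_comm]
  have hσ (s : κ) := exists_injective_of_ncard_le (α := {i // χ i = s}) hG
    (c := fun i => c i) (r := fun j => r j) (fun j => hr j) he hae
    (fun v => (hncard s (c · = v)).symm ▸ hupper s v)
    fun C => (hncard s fun j => ∃ v ∈ C, r j v).symm ▸ hlower s C
  choose σ hinj hσ using hσ
  let τ (s : κ) : Equiv.Perm {i // χ i = s} :=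
    Equiv.ofBijective (σ s) (Finite.injective_iff_bijective.mp (hinj s))
  exact ⟨(Equiv.sigmaFiberEquiv χ).permCongr (Equiv.sigmaCongrRight τ), fun i =>
    ⟨(σ (χ i) ⟨i, rfl⟩).2, hσ (χ i) ⟨i, rfl⟩⟩⟩

end Matching

/-! ### Cells of `[0, π]` -/

/-- The `v`-th of the `k + 1` equal open subintervals of `[0, π]`. -/
def openCell (k : ℕ) (v : Fin (k + 1)) : Set ℝ :=
  Set.Ioo (v * (Real.pi / (k + 1))) ((v + 1) * (Real.pi / (k + 1)))

/-- The index of the cell containing a point of `[0, π]`. Common endpoints belong to the cell on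
their right, and `π` to the last cell. -/
noncomputable def cellIndex (k : ℕ) (x : ℝ) : Fin (k + 1) :=
  ⟨min ⌊x / (Real.pi / (k + 1))⌋₊ k, Nat.lt_succ_of_le (min_le_right _ _)⟩

lemma openCell_subset_Ioo {k : ℕ} (v : Fin (k + 1)) : openCell k v ⊆ Set.Ioo 0 Real.pi := by
  have hv : (v : ℝ) + 1 ≤ k + 1 := by exact_mod_cast v.2
  have hpi : (k + 1) * (Real.pi / (k + 1)) = Real.pi := by field_simp
  refine Set.Ioo_subset_Ioo (by positivity) ?_
  calc (v + 1) * (Real.pi / (k + 1)) ≤ (k + 1) * (Real.pi / (k + 1)) := by gcongr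
    _ = Real.pi := hpi

lemma cellIndex_eq_of_mem_openCell {k : ℕ} {v : Fin (k + 1)} {x : ℝ} (hx : x ∈ openCell k v) :
    cellIndex k x = v := by
  have hw : 0 < Real.pi / (k + 1) := by positivity
  have hfloor : ⌊x / (Real.pi / (k + 1))⌋₊ = v := by
    rw [Nat.floor_eq_iff (div_nonneg (openCell_subset_Ioo v hx).1.le hw.le), le_div_iff₀ hw,
      div_lt_iff₀ hw]
    exact ⟨hx.1.le, hx.2⟩
  exact Fin.ext <| (congrArg (min · k) hfloor).trans (min_eq_left (Nat.lt_succ_iff.mp v.2))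

lemma mem_Icc_cellIndex (k : ℕ) {x : ℝ} (hx : x ∈ Set.Icc 0 Real.pi) :
    x ∈ Set.Icc (cellIndex k x * (Real.pi / (k + 1)))
      ((cellIndex k x + 1) * (Real.pi / (k + 1))) := by
  have hw : 0 < Real.pi / (k + 1) := by positivity
  rw [Set.mem_Icc, ← le_div_iff₀ hw, ← div_le_iff₀ hw]
  simp only [cellIndex]
  rcases le_total ⌊x / (Real.pi / (k + 1))⌋₊ k with h | h
  · rw [min_eq_left h]
    exact ⟨Nat.floor_le (div_nonneg hx.1 hw.le), (Nat.lt_floor_add_one _).le⟩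
  · rw [min_eq_right h]
    refine ⟨(Nat.le_floor_iff (div_nonneg hx.1 hw.le)).mp h, ?_⟩
    rw [div_le_iff₀ hw, mul_div_cancel₀ _ (by positivity)]
    exact hx.2

lemma abs_sub_le_of_cellIndex {k : ℕ} {x y : ℝ} (hx : x ∈ Set.Icc 0 Real.pi)
    (hy : y ∈ Set.Icc 0 Real.pi)
    (hxy : cellIndex k y = cellIndex k x ∨
      (SimpleGraph.pathGraph (k + 1)).Adj (cellIndex k y) (cellIndex k x)) :
    |x - y| ≤ 2 * (Real.pi / (k + 1)) := by
  have hw : 0 < Real.pi / (k + 1) := by positivity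
  have hnat : (cellIndex k x : ℕ) ≤ cellIndex k y + 1 ∧
      (cellIndex k y : ℕ) ≤ cellIndex k x + 1 := by
    rw [SimpleGraph.pathGraph_adj] at hxy
    omega
  have hle : (cellIndex k x : ℝ) ≤ cellIndex k y + 1 := by exact_mod_cast hnat.1
  have hge : (cellIndex k y : ℝ) ≤ cellIndex k x + 1 := by exact_mod_cast hnat.2
  obtain ⟨hx₁, hx₂⟩ := mem_Icc_cellIndex k hx
  obtain ⟨hy₁, hy₂⟩ := mem_Icc_cellIndex k hy
  rw [abs_le]
  constructor <;> nlinarith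

lemma volume_real_iUnion_openCell_sdiff {k : ℕ} (C : Set (Fin (k + 1))) {Z : Set ℝ}
    (hZ : MeasurableSet Z) (hnull : volume Z = 0) :
    volume.real (⋃ v ∈ C, openCell k v \ Z) = C.ncard * (Real.pi / (k + 1)) := by
  have hdisj : Set.PairwiseDisjoint C fun v => openCell k v \ Z := fun v _ w _ hvw =>
    Set.disjoint_left.mpr fun x hxv hxw => hvw <|
      (cellIndex_eq_of_mem_openCell hxv.1).symm.trans (cellIndex_eq_of_mem_openCell hxw.1)
  have hcell (v : Fin (k + 1)) :
      volume (openCell k v \ Z) = ENNReal.ofReal (Real.pi / (k + 1)) := by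
    rw [measure_sdiff_null hnull, openCell, Real.volume_Ioo, ← sub_mul, add_sub_cancel_left,
      one_mul]
  lift C to Finset (Fin (k + 1)) using C.toFinite
  simp only [Finset.mem_coe]
  rw [measureReal_biUnion_finset hdisj (fun v _ => measurableSet_Ioo.diff hZ)
    fun v _ => (hcell v).trans_ne ENNReal.ofReal_ne_top, Set.ncard_coe_finset]
  have hw : 0 ≤ Real.pi / (k + 1) := by positivity
  simp only [measureReal_def, hcell, ENNReal.toReal_ofReal hw, Finset.sum_const, nsmul_eq_mul]

/-- The points of the uniform grid in `(0, π)`. -/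
noncomputable def uniformGrid {n : ℕ} (i : Fin n) : ℝ := ((i : ℕ) + 1) * Real.pi / (n + 1)

lemma uniformGrid_mem_Icc {n : ℕ} (i : Fin n) : uniformGrid i ∈ Set.Icc 0 Real.pi := by
  have hi : ((i : ℕ) : ℝ) + 1 ≤ n + 1 := by exact_mod_cast Nat.succ_le_succ i.2.le
  refine ⟨by unfold uniformGrid; positivity, ?_⟩
  rw [uniformGrid, div_le_iff₀ (by positivity), mul_comm Real.pi]
  gcongr

lemma injOn_div_two_of_altSign_eq {n : ℕ} (s : ℤˣ) :
    Set.InjOn (fun i : Fin n => (i : ℕ) / 2) {i | altSign i = s} := by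
  intro i hi j hj hij
  have hparity : Even (i : ℕ) ↔ Even (j : ℕ) := by
    rw [← neg_one_pow_eq_one_iff_even (R := ℤˣ) (by decide),
      ← neg_one_pow_eq_one_iff_even (R := ℤˣ) (by decide)]
    exact Eq.congr_left (hi.trans hj.symm)
  simp only [Nat.even_iff] at hparity hij
  omega

lemma ncard_altSign_eq_and_mem_Icc_le {n : ℕ} (s : ℤˣ) {x y : ℝ} (hxy : x ≤ y) :
    ({i : Fin n | altSign i = s ∧ ((i : ℕ) : ℝ) ∈ Set.Icc x y}.ncard : ℝ) ≤
      (y - x) / 2 + 3 / 2 := by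
  set A := {i : Fin n | altSign i = s ∧ ((i : ℕ) : ℝ) ∈ Set.Icc x y}
  have hmaps : ∀ i ∈ A, (((i : ℕ) / 2 : ℕ) : ℤ) ∈ (Finset.Icc ⌈(x - 1) / 2⌉ ⌊y / 2⌋ : Set ℤ) := by
    rintro i ⟨-, hxi, hiy⟩
    have hle : 2 * (((i : ℕ) / 2 : ℕ) : ℝ) ≤ (i : ℕ) := by
      exact_mod_cast Nat.mul_div_le (i : ℕ) 2
    have hge : ((i : ℕ) : ℝ) ≤ 2 * (((i : ℕ) / 2 : ℕ) : ℝ) + 1 := by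
      exact_mod_cast (by omega : (i : ℕ) ≤ 2 * ((i : ℕ) / 2) + 1)
    rw [Finset.mem_coe, Finset.mem_Icc, Int.ceil_le, Int.le_floor, Int.cast_natCast]
    constructor <;> linarith
  have hinj : Set.InjOn (fun i : Fin n => (((i : ℕ) / 2 : ℕ) : ℤ)) A :=
    Nat.cast_injective.comp_injOn ((injOn_div_two_of_altSign_eq s).mono fun _ hi => hi.1)
  have hcard := Set.ncard_le_ncard_of_injOn _ hmaps hinj (Finset.finite_toSet _)
  rw [Set.ncard_coe_finset, Int.card_Icc] at hcard
  calc (A.ncard : ℝ) ≤ ((⌊y / 2⌋ + 1 - ⌈(x - 1) / 2⌉).toNat : ℝ) := by exact_mod_cast hcard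
    _ ≤ (y - x) / 2 + 3 / 2 := by
      rw [← Int.cast_natCast, Int.toNat_eq_max]
      have hfloor := Int.floor_le (y / 2)
      have hceil := Int.le_ceil ((x - 1) / 2)
      push_cast
      exact max_le (by linarith) (by linarith)

lemma ncard_altSign_eq_and_cellIndex_eq_le (n k : ℕ) (s : ℤˣ) (v : Fin (k + 1)) :
    ({i : Fin n | altSign i = s ∧ cellIndex k (uniformGrid i) = v}.ncard : ℝ) ≤
      n / (2 * (k + 1)) + 2 := by
  set u : ℝ := (n + 1) / (k + 1) with hu
  have hu0 : 0 ≤ u := by positivity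
  have hsub : {i : Fin n | altSign i = s ∧ cellIndex k (uniformGrid i) = v} ⊆
      {i : Fin n | altSign i = s ∧ ((i : ℕ) : ℝ) ∈ Set.Icc (v * u - 1) ((v + 1) * u - 1)} := by
    rintro i ⟨hi, rfl⟩
    obtain ⟨hlo, hhi⟩ := mem_Icc_cellIndex k (uniformGrid_mem_Icc i)
    have hgrid : uniformGrid i = ((i : ℕ) + 1) / u * (Real.pi / (k + 1)) := by
      rw [uniformGrid, hu]
      field_simp
    have hw : 0 < Real.pi / (k + 1) := by positivity
    have hu' : 0 < u := by positivity
    generalize cellIndex k (uniformGrid i) = v at hlo hhi ⊢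
    rw [hgrid, mul_le_mul_iff_left₀ hw, le_div_iff₀ hu'] at hlo
    rw [hgrid, mul_le_mul_iff_left₀ hw, div_le_iff₀ hu'] at hhi
    exact ⟨hi, sub_le_iff_le_add.mpr hlo, le_sub_iff_add_le.mpr hhi⟩
  calc ({i : Fin n | altSign i = s ∧ cellIndex k (uniformGrid i) = v}.ncard : ℝ)
      ≤ ((v + 1) * u - 1 - (v * u - 1)) / 2 + 3 / 2 :=
        (Nat.cast_le.mpr (Set.ncard_le_ncard hsub)).trans
          (ncard_altSign_eq_and_mem_Icc_le s (by linarith))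
    _ = n / (2 * (k + 1)) + 1 / (k + 1) / 2 + 3 / 2 := by
      rw [hu]
      field_simp
      ring
    _ ≤ n / (2 * (k + 1)) + 2 := by
      have : 1 / ((k : ℝ) + 1) ≤ 1 := div_le_one_of_le₀ (by simp) (by positivity)
      linarith

/-! ### Matching eigenvalues with grid points -/

/-- After a permutation preserving the signs of `Δ_n`, every `l i` is a value of `f` at a point of
`[0, π]` within `ε` of the `i`-th point of the uniform grid. -/
def HasMatching (f : ℝ → ℝ) {n : ℕ} (l : Fin n → ℝ) (ε : ℝ) : Prop :=
  ∃ σ : Equiv.Perm (Fin n), ∀ i, altSign (σ i) = altSign i ∧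
    ∃ x ∈ Set.Icc 0 Real.pi, |x - uniformGrid i| ≤ ε ∧ f x = l (σ i)

lemma hasMatching_of_forall_mem_image {f : ℝ → ℝ} {n : ℕ} {l : Fin n → ℝ}
    (hl : ∀ j, l j ∈ f '' Set.Icc 0 Real.pi) {ε : ℝ} (hε : Real.pi ≤ ε) : HasMatching f l ε := by
  refine ⟨1, fun i => ⟨rfl, ?_⟩⟩
  obtain ⟨x, hx, hfx⟩ := hl i
  refine ⟨x, hx, ?_, hfx⟩
  have hgrid := uniformGrid_mem_Icc i
  rw [abs_le]
  constructor <;> linarith [hx.1, hx.2, hgrid.1, hgrid.2]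

section

variable {f : ℝ → ℝ} (heven : Function.Even f) (hbdd : Bornology.IsBounded (f '' Set.Icc 0 Real.pi))
  (hsing : volume (closure (singularSet f)) = 0) {V : ∀ n, Matrix (Fin n) (Fin n) ℝ}
  {l : ∀ n, Fin n → ℝ} (h : ∀ n, IsAdapted (toep f n) (V n) (l n))

include heven hsing in
lemma ncard_div_le_circ_real_preimage_image {k : ℕ} (C : Set (Fin (k + 1))) :
    C.ncard / (k + 1) ≤
      circ.real (f ⁻¹' (f '' ⋃ v ∈ C, openCell k v \ closure (singularSet f))) := by
  have hmeas : MeasurableSet (⋃ v ∈ C, openCell k v \ closure (singularSet f)) :=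
    (isOpen_biUnion fun _ _ => isOpen_Ioo.sdiff isClosed_closure).measurableSet
  refine le_of_eq_of_le ?_ (le_circ_real_preimage_image heven hmeas
    (Set.iUnion₂_subset fun v _ => Set.sdiff_subset.trans (openCell_subset_Ioo v)))
  rw [volume_real_iUnion_openCell_sdiff C isClosed_closure.measurableSet hsing]
  field_simp

include heven hbdd hsing h in
lemma eventually_forall_le_ncard_altSign_eq_and_cellIndex_mem (k : ℕ) :
    ∀ᶠ n : ℕ in atTop, ∀ (s : ℤˣ) (C : Set (Fin (k + 1))),
      C.ncard * (n / (2 * (k + 1)) : ℝ) - n / (4 * (k + 1)) ≤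
        {j : Fin n | altSign j = s ∧
          ∃ v ∈ C, ∃ x ∈ Set.Icc 0 Real.pi, cellIndex k x = v ∧ f x = l n j}.ncard := by
  refine eventually_all.mpr fun s => eventually_all.mpr fun C => ?_
  set O := ⋃ v ∈ C, openCell k v \ closure (singularSet f)
  have hOpen : IsOpen (f '' O) := isOpen_image_of_subset_regularSet
    (isOpen_biUnion fun _ _ => isOpen_Ioo.sdiff isClosed_closure)
    (Set.iUnion₂_subset fun v _ => Set.sdiff_subset_sdiff_left (openCell_subset_Ioo v))
  have hδ : (0 : ℝ) < 1 / (4 * (k + 1)) := by positivity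
  filter_upwards [eventually_le_ncard_altSign_eq_and_mem heven (memLp_circ heven hbdd hsing 2) h
    hOpen s hδ] with n hn
  have hsub : {j : Fin n | altSign j = s ∧ l n j ∈ f '' O} ⊆ {j | altSign j = s ∧
      ∃ v ∈ C, ∃ x ∈ Set.Icc 0 Real.pi, cellIndex k x = v ∧ f x = l n j} := by
    rintro j ⟨hj, x, hx, hfx⟩
    obtain ⟨v, hv, hxv, -⟩ := Set.mem_iUnion₂.mp hx
    exact ⟨hj, v, hv, x, Set.Ioo_subset_Icc_self (openCell_subset_Ioo v hxv),
      cellIndex_eq_of_mem_openCell hxv, hfx⟩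
  calc C.ncard * (n / (2 * (k + 1)) : ℝ) - n / (4 * (k + 1))
      = n * (C.ncard / (k + 1) / 2 - 1 / (4 * (k + 1))) := by field_simp
    _ ≤ n * (circ.real (f ⁻¹' (f '' O)) / 2 - 1 / (4 * (k + 1))) := by
      gcongr
      exact ncard_div_le_circ_real_preimage_image heven hsing C
    _ ≤ {j : Fin n | altSign j = s ∧ l n j ∈ f '' O}.ncard := hn
    _ ≤ _ := Nat.cast_le.mpr (Set.ncard_le_ncard hsub)

include heven hbdd hsing h in
lemma eventually_hasMatching (hl : ∀ n j, l n j ∈ f '' Set.Icc 0 Real.pi) (k : ℕ) :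
    ∀ᶠ n : ℕ in atTop, HasMatching f (l n) (2 * (Real.pi / (k + 1))) := by
  have hlarge : ∀ᶠ n : ℕ in atTop, 8 * ((k : ℝ) + 1) ^ 2 ≤ n :=
    tendsto_natCast_atTop_atTop.eventually_ge_atTop _
  filter_upwards [hlarge, eventually_forall_le_ncard_altSign_eq_and_cellIndex_mem heven hbdd hsing
    h k] with n hn hlower
  have herr : (Fintype.card (Fin (k + 1)) : ℝ) * 2 + n / (4 * (k + 1)) ≤ n / (2 * (k + 1)) := by
    rw [Fintype.card_fin, Nat.cast_succ]
    field_simp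
    linarith
  obtain ⟨σ, hσ⟩ := exists_perm_of_ncard_le (SimpleGraph.pathGraph_preconnected (k + 1)) altSign
    (r := fun j v => ∃ x ∈ Set.Icc 0 Real.pi, cellIndex k x = v ∧ f x = l n j)
    (fun j => (hl n j).elim fun x hx => ⟨_, x, hx.1, rfl, hx.2⟩) zero_le_two herr
    (ncard_altSign_eq_and_cellIndex_eq_le n k) hlower
  refine ⟨σ, fun i => ⟨(hσ i).1, ?_⟩⟩
  obtain ⟨_, hadj, x, hx, rfl, hfx⟩ := (hσ i).2
  exact ⟨x, hx, abs_sub_le_of_cellIndex hx (uniformGrid_mem_Icc i) hadj, hfx⟩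

end

lemma exists_tendsto_atTop_of_eventually {P : ℕ → ℕ → Prop} (hzero : ∀ n, P n 0)
    (hP : ∀ k, ∀ᶠ n in atTop, P n k) : ∃ κ : ℕ → ℕ, Tendsto κ atTop atTop ∧ ∀ n, P n (κ n) := by
  classical
  refine ⟨fun n => Nat.findGreatest (P n) n, tendsto_atTop.mpr fun k => ?_, fun n =>
    Nat.findGreatest_spec n.zero_le (hzero n)⟩
  filter_upwards [hP k, eventually_ge_atTop k] with n hn hkn using Nat.le_findGreatest hkn hn

lemma exists_tendsto_zero_hasMatching {f : ℝ → ℝ} (heven : Function.Even f)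
    (hbdd : Bornology.IsBounded (f '' Set.Icc 0 Real.pi))
    (hsing : volume (closure (singularSet f)) = 0) {V : ∀ n, Matrix (Fin n) (Fin n) ℝ}
    {l : ∀ n, Fin n → ℝ} (h : ∀ n, IsAdapted (toep f n) (V n) (l n))
    (hl : ∀ n j, l n j ∈ f '' Set.Icc 0 Real.pi) :
    ∃ ε : ℕ → ℝ, Tendsto ε atTop (𝓝 0) ∧ ∀ n, HasMatching f (l n) (ε n) := by
  have hpi : Real.pi ≤ 2 * (Real.pi / ((0 : ℕ) + 1)) := by
    norm_num
    linarith [Real.pi_pos]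
  obtain ⟨κ, hκ, hmatch⟩ := exists_tendsto_atTop_of_eventually
    (P := fun n k => HasMatching f (l n) (2 * (Real.pi / (k + 1))))
    (fun n => hasMatching_of_forall_mem_image (hl n) hpi)
    (eventually_hasMatching heven hbdd hsing h hl)
  refine ⟨_, ?_, hmatch⟩
  have hlim : Tendsto (fun k : ℕ => 2 * (Real.pi / ((k : ℝ) + 1))) atTop (𝓝 0) := by
    simpa using (tendsto_const_div_atTop_nhds_zero_nat Real.pi |>.comp
      (tendsto_add_atTop_nat 1)).const_mul 2
  exact hlim.comp hκ

lemma IsAdapted.mem_image_Icc {f : ℝ → ℝ} (heven : Function.Even f)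
    (hbdd : Bornology.IsBounded (f '' Set.Icc 0 Real.pi))
    (hsing : volume (closure (singularSet f)) = 0)
    (hrange : Set.Ioo (sInf (f '' Set.Icc 0 Real.pi)) (sSup (f '' Set.Icc 0 Real.pi))
      ⊆ f '' Set.Icc 0 Real.pi) {n : ℕ} {V : Matrix (Fin n) (Fin n) ℝ} {l : Fin n → ℝ}
    (h : IsAdapted (toep f n) V l) (j : Fin n) : l j ∈ f '' Set.Icc 0 Real.pi := by
  refine hrange (h.eigenvalue_mem_Ioo
    (memLp_one_iff_integrable.mp (memLp_circ heven hbdd hsing 1)) ?_ j)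
  filter_upwards [ae_circ_abs_mem_regularSet hsing] with x hx
  rw [← apply_abs_of_even heven]
  exact mem_Ioo_of_mem_regularSet hbdd hx

end ToeplitzFlip

open ToeplitzFlip in
theorem stmt2_general
    (f : ℝ → ℝ)
    (hf_even : ∀ x, f (-x) = f x)
    (hf_bdd : ∃ C : ℝ, ∀ x ∈ Set.Icc (-Real.pi) Real.pi, |f x| ≤ C)
    (hsing : volume (closure (singularSet f)) = 0)
    (hrange : Set.Ioo (sInf (f '' Set.Icc 0 Real.pi)) (sSup (f '' Set.Icc 0 Real.pi))
      ⊆ f '' Set.Icc 0 Real.pi) :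
    ∃ (x : (n : ℕ) → Fin n → ℝ)
      (V : (n : ℕ) → Matrix (Fin n) (Fin n) ℝ) (lamT lamH : (n : ℕ) → Fin n → ℝ),
      (∀ n, ∀ i : Fin n, x n i ∈ Set.Icc 0 Real.pi) ∧
      (∀ ε > (0:ℝ), ∃ N : ℕ, ∀ n ≥ N, ∀ i : Fin n,
        |x n i - ((i : ℕ) + 1) * Real.pi / (n + 1)| < ε) ∧
      (∀ n : ℕ,
        V n * (V n)ᵀ = 1 ∧
        flipM n = V n * Matrix.diagonal (fun i : Fin n => ((-1 : ℝ)) ^ (i : ℕ)) * (V n)ᵀ ∧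
        toeplitzR (fun t => (f t : ℂ)) n = V n * Matrix.diagonal (lamT n) * (V n)ᵀ ∧
        flipM n * toeplitzR (fun t => (f t : ℂ)) n
          = V n * (Matrix.diagonal (fun i : Fin n => ((-1 : ℝ)) ^ (i : ℕ))
              * Matrix.diagonal (lamT n)) * (V n)ᵀ ∧
        (∀ i : Fin n, lamH n i = (-1 : ℝ) ^ (i : ℕ) * lamT n i) ∧
        (∀ i : Fin n, lamT n i = f (x n i))) := by
  have hbdd : Bornology.IsBounded (f '' Set.Icc 0 Real.pi) := by
    obtain ⟨C, hC⟩ := hf_bdd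
    refine isBounded_iff_forall_norm_le.mpr ⟨C, Set.forall_mem_image.mpr fun x hx => hC x ?_⟩
    exact ⟨(neg_nonpos.mpr Real.pi_pos.le).trans hx.1, hx.2⟩
  choose V l hV using fun n => exists_isAdapted (toep_isSymm f n) (commute_toep_flipM f n)
  obtain ⟨ε, hε, hmatch⟩ := exists_tendsto_zero_hasMatching hf_even hbdd hsing hV fun n =>
    (hV n).mem_image_Icc hf_even hbdd hsing hrange
  choose σ hσ x hx hgrid hfx using hmatch
  have hVσ (n : ℕ) := (hV n).permute (hσ n)
  refine ⟨x, fun n => (V n).submatrix id (σ n), fun n => l n ∘ σ n,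
    fun n i => (-1) ^ (i : ℕ) * l n (σ n i), hx, fun δ hδ => ?_, fun n => ?_⟩
  · obtain ⟨N, hN⟩ := eventually_atTop.mp (hε.eventually_lt_const hδ)
    exact ⟨N, fun n hn i => (hgrid n i).trans_lt (hN n hn)⟩
  · rw [toeplitzR_ofReal_of_even hf_even (memLp_one_iff_integrable.mp
      (memLp_circ hf_even hbdd hsing 1))]
    exact ⟨(hVσ n).orth, (hVσ n).flip, (hVσ n).eig, (hVσ n).flipM_mul, fun i => rfl,
      fun i => (hfx n i).symm⟩

open ToeplitzFlip in
/-- Let `f : [-π,π] → ℝ` be even and bounded, with finitely many (weak)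
local max points, local min points and discontinuity points, essential range
`[inf_{[0,π]} f, sup_{[0,π]} f]`, and `(inf f, sup f) ⊆ f([0,π])`.  Then there exist an
asymptotically uniform grid in `[0,π]`, real unitary matrices `V_n` and orderings of the
eigenvalues of `T_n(f)`, `H_n(f)` realizing the simultaneous diagonalizations, the
alternating sign relation, and `λ_i(T_n(f)) = f(x_{i,n})`. -/
theorem stmt2
    (f : ℝ → ℝ)
    (hf_even : ∀ x, f (-x) = f x)
    (hf_bdd : ∃ C : ℝ, ∀ x ∈ Set.Icc (-Real.pi) Real.pi, |f x| ≤ C)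
    (hmax_fin : {x ∈ Set.Icc (-Real.pi) Real.pi |
      IsLocalMaxOn f (Set.Icc (-Real.pi) Real.pi) x}.Finite)
    (hmin_fin : {x ∈ Set.Icc (-Real.pi) Real.pi |
      IsLocalMinOn f (Set.Icc (-Real.pi) Real.pi) x}.Finite)
    (hdisc_fin : {x ∈ Set.Icc (-Real.pi) Real.pi |
      ¬ ContinuousWithinAt f (Set.Icc (-Real.pi) Real.pi) x}.Finite)
    (hER : essRangeR f (Set.Icc (-Real.pi) Real.pi)
      = Set.Icc (sInf (f '' Set.Icc 0 Real.pi)) (sSup (f '' Set.Icc 0 Real.pi)))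
    (hrange : Set.Ioo (sInf (f '' Set.Icc 0 Real.pi)) (sSup (f '' Set.Icc 0 Real.pi))
      ⊆ f '' Set.Icc 0 Real.pi) :
    ∃ (x : (n : ℕ) → Fin n → ℝ)
      (V : (n : ℕ) → Matrix (Fin n) (Fin n) ℝ) (lamT lamH : (n : ℕ) → Fin n → ℝ),
      (∀ n, ∀ i : Fin n, x n i ∈ Set.Icc 0 Real.pi) ∧
      (∀ ε > (0:ℝ), ∃ N : ℕ, ∀ n ≥ N, ∀ i : Fin n,
        |x n i - ((i : ℕ) + 1) * Real.pi / (n + 1)| < ε) ∧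
      (∀ n : ℕ,
        V n * (V n)ᵀ = 1 ∧
        flipM n = V n * Matrix.diagonal (fun i : Fin n => ((-1 : ℝ)) ^ (i : ℕ)) * (V n)ᵀ ∧
        toeplitzR (fun t => (f t : ℂ)) n = V n * Matrix.diagonal (lamT n) * (V n)ᵀ ∧
        flipM n * toeplitzR (fun t => (f t : ℂ)) n
          = V n * (Matrix.diagonal (fun i : Fin n => ((-1 : ℝ)) ^ (i : ℕ))
              * Matrix.diagonal (lamT n)) * (V n)ᵀ ∧
        (∀ i : Fin n, lamH n i = (-1 : ℝ) ^ (i : ℕ) * lamT n i) ∧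
        (∀ i : Fin n, lamT n i = f (x n i))) := by
  have hfin := finite_singularSet hmax_fin hmin_fin hdisc_fin
  exact stmt2_general f hf_even hf_bdd
    (by rw [hfin.isClosed.closure_eq]; exact hfin.measure_zero _) hrange
end

section
/- Let T_n be a real symmetric n×n Toeplitz matrix. Then there exists an orthonormal basis of ℝⁿ consisting of eigenvectors of T_n such that exactly ⌈n/2⌉ vectors of this basis are symmetric (Y_n v = v) and the other ⌊n/2⌋ vectors are skew-symmetric (Y_n v = −v). -/
/-!
Reversing both indices of a Toeplitz matrix transposes it, so a symmetric one commutes with the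
flip `Y`. Commuting symmetric matrices have a common orthonormal eigenbasis, and since `Y ^ 2 = 1`
each vector of such a basis is symmetric or skew-symmetric. If `p` of them are symmetric and `q`
skew-symmetric, then `p + q = n`, while `p - q` is the trace of `Y`, which is the number of indices
fixed by the reversal, namely `n % 2`.
-/

open Matrix

open Module

section InnerProductSpace

variable {𝕜 E κ : Type*} [RCLike 𝕜] [NormedAddCommGroup E] [InnerProductSpace 𝕜 E]
  [FiniteDimensional 𝕜 E] [Fintype κ]

theorem exists_orthonormalBasis_forall_exists_mem {ι : Type*} [DecidableEq ι]
    {V : ι → Submodule 𝕜 E} (hV : DirectSum.IsInternal V)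
    (hVorth : OrthogonalFamily 𝕜 (fun i => V i) fun i => (V i).subtypeₗᵢ)
    (hκ : finrank 𝕜 E = Fintype.card κ) :
    ∃ b : OrthonormalBasis κ 𝕜 E, ∀ k, ∃ i, b k ∈ V i := by
  -- Mathlib's subordinate basis needs a finite family, so the zero summands are discarded.
  have : Fintype {i // V i ≠ ⊥} := hV.submodule_iSupIndep.fintypeNeBotOfFiniteDimensional
  have hV' : DirectSum.IsInternal fun i : {i // V i ≠ ⊥} => V i :=
    DirectSum.isInternal_ne_bot_iff.mpr hV
  have hVorth' := hVorth.comp (Subtype.val_injective (p := fun i => V i ≠ ⊥))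
  refine ⟨(hV'.subordinateOrthonormalBasis hκ hVorth').reindex (Fintype.equivFin κ).symm,
    fun k => ?_⟩
  rw [OrthonormalBasis.reindex_apply]
  exact ⟨_, hV'.subordinateOrthonormalBasis_subordinate hκ _ hVorth'⟩

theorem exists_orthonormalBasis_apply_eq_smul_of_commute {A B : E →ₗ[𝕜] E} (hA : A.IsSymmetric)
    (hB : B.IsSymmetric) (hAB : Commute A B) (hκ : finrank 𝕜 E = Fintype.card κ) :
    ∃ (b : OrthonormalBasis κ 𝕜 E) (α β : κ → 𝕜),
      ∀ k, A (b k) = α k • b k ∧ B (b k) = β k • b k := by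
  classical
  obtain ⟨b, hb⟩ := exists_orthonormalBasis_forall_exists_mem
    (hA.directSum_isInternal_of_commute hB hAB)
    (hA.orthogonalFamily_eigenspace_inf_eigenspace hB) hκ
  choose γ hγ using hb
  exact ⟨b, fun k => (γ k).2, fun k => (γ k).1, fun k =>
    ⟨End.mem_eigenspace_iff.mp (hγ k).1, End.mem_eigenspace_iff.mp (hγ k).2⟩⟩

end InnerProductSpace

theorem exists_orthonormalBasis_mulVec_eq_smul_of_commute {𝕜 m : Type*} [RCLike 𝕜] [Fintype m]
    {A B : Matrix m m 𝕜} (hA : A.IsHermitian) (hB : B.IsHermitian) (hAB : Commute A B) :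
    ∃ (b : OrthonormalBasis m 𝕜 (EuclideanSpace 𝕜 m)) (α β : m → 𝕜),
      ∀ i, A *ᵥ b i = α i • (b i).ofLp ∧ B *ᵥ b i = β i • (b i).ofLp := by
  classical
  obtain ⟨b, α, β, hb⟩ := exists_orthonormalBasis_apply_eq_smul_of_commute
    (isSymmetric_toEuclideanLin_iff.mpr hA) (isSymmetric_toEuclideanLin_iff.mpr hB)
    (hAB.map (toLpLinAlgEquiv 2)) finrank_euclideanSpace
  exact ⟨b, α, β, fun i => ⟨congrArg WithLp.ofLp (hb i).1, congrArg WithLp.ofLp (hb i).2⟩⟩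

section Involution

variable {R M ι : Type*} [CommRing R] [AddCommGroup M] [Module R M] {J : End R M} {b : Basis ι R M}

theorem apply_eq_self_or_eq_neg_of_apply_eq_smul [IsDomain R] [IsTorsionFree R M]
    (hJ : J * J = 1) {x : M} {β : R} (hx : J x = β • x) : J x = x ∨ J x = -x := by
  have hsq : (β * β - 1) • x = 0 := by
    rw [sub_smul, sub_eq_zero, one_smul, mul_smul, ← hx, ← map_smul, ← hx, ← End.mul_apply, hJ,
      End.one_apply]
  rcases smul_eq_zero.mp hsq with hβ | rfl
  · rcases mul_self_eq_one_iff.mp (sub_eq_zero.mp hβ) with rfl | rfl <;> simp [hx]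
  · simp

theorem apply_basis_eq_neg_iff_ne (h2 : (2 : R) ≠ 0) (hJ : ∀ i, J (b i) = b i ∨ J (b i) = -b i)
    (i : ι) : J (b i) = -b i ↔ J (b i) ≠ b i := by
  refine ⟨fun hneg hpos => h2 ?_, (hJ i).resolve_left⟩
  have hzero : (2 : R) • b i = 0 := by
    rw [two_smul, ← eq_neg_iff_add_eq_zero, ← hneg, hpos]
  simpa using congrArg (fun x => b.repr x i) hzero

variable [Finite ι]

theorem ncard_fixed_add_ncard_negated (h2 : (2 : R) ≠ 0)
    (hJ : ∀ i, J (b i) = b i ∨ J (b i) = -b i) :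
    {i | J (b i) = b i}.ncard + {i | J (b i) = -b i}.ncard = Nat.card ι := by
  simp only [apply_basis_eq_neg_iff_ne h2 hJ]
  exact Set.ncard_add_ncard_compl {i | J (b i) = b i}

theorem trace_eq_ncard_fixed_sub_ncard_negated (h2 : (2 : R) ≠ 0)
    (hJ : ∀ i, J (b i) = b i ∨ J (b i) = -b i) :
    LinearMap.trace R M J =
      ({i | J (b i) = b i}.ncard : R) - ({i | J (b i) = -b i}.ncard : R) := by
  classical
  have := Fintype.ofFinite ι
  have hdiag : ∀ i, LinearMap.toMatrix b b J i i =
      (if J (b i) = b i then 1 else 0) - (if J (b i) ≠ b i then 1 else 0) := by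
    intro i
    rw [LinearMap.toMatrix_apply]
    rcases hJ i with h | h
    · simp [h]
    · rw [if_neg ((apply_basis_eq_neg_iff_ne h2 hJ i).mp h),
        if_pos ((apply_basis_eq_neg_iff_ne h2 hJ i).mp h)]
      simp [h]
  simp only [apply_basis_eq_neg_iff_ne h2 hJ]
  rw [LinearMap.trace_eq_matrix_trace R b, Matrix.trace]
  simp only [Matrix.diag_apply, hdiag]
  rw [Finset.sum_sub_distrib, Finset.sum_boole, Finset.sum_boole]
  simp only [Set.ncard_eq_toFinset_card', Set.toFinset_ofPred]

end Involution

section Flip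

variable {n : ℕ}

theorem flipM_eq_permMatrix : flipM n = Fin.revPerm.permMatrix ℝ := by
  ext i j
  simp only [flipM, of_apply, PEquiv.toMatrix_apply, Equiv.toPEquiv_apply]
  refine if_congr ?_ rfl rfl
  rw [Fin.revPerm_apply, Option.mem_some_iff, Fin.ext_iff, Fin.val_rev]
  omega

theorem isHermitian_flipM : (flipM n).IsHermitian := by
  rw [IsHermitian, flipM_eq_permMatrix, conjTranspose_permMatrix, Equiv.Perm.inv_def,
    Fin.revPerm_symm]

theorem flipM_mul_self : flipM n * flipM n = 1 := by
  have hrev : Fin.revPerm * Fin.revPerm = (1 : Equiv.Perm (Fin n)) := Equiv.ext Fin.rev_rev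
  rw [flipM_eq_permMatrix, ← permMatrix_mul, hrev, permMatrix_one]

theorem trace_flipM : (flipM n).trace = (n % 2 : ℕ) := by
  rw [flipM_eq_permMatrix, trace_permutation]
  congr 1
  have hfixed : ∀ i : Fin n, i ∈ Function.fixedPoints Fin.revPerm ↔ 2 * (i : ℕ) + 1 = n := by
    intro i
    rw [Function.mem_fixedPoints_iff, Fin.revPerm_apply, Fin.ext_iff, Fin.val_rev]
    omega
  obtain ⟨k, rfl | rfl⟩ := n.even_or_odd'
  · have hempty : Function.fixedPoints (Fin.revPerm (n := 2 * k)) = ∅ :=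
      Set.eq_empty_of_forall_notMem fun i hi => by have := (hfixed i).mp hi; omega
    rw [hempty, Set.ncard_empty, Nat.mul_mod_right]
  · have hmiddle : Function.fixedPoints Fin.revPerm = {(⟨k, by omega⟩ : Fin (2 * k + 1))} := by
      ext i
      simp only [hfixed, Set.mem_singleton_iff, Fin.ext_iff]
      omega
    rw [hmiddle, Set.ncard_singleton, Nat.mul_add_mod]

theorem mul_flipM_of_toeplitz {T : Matrix (Fin n) (Fin n) ℝ} {t : ℤ → ℝ}
    (hToep : ∀ i j : Fin n, T i j = t ((i : ℤ) - (j : ℤ))) : T * flipM n = flipM n * Tᵀ := by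
  ext i j
  rw [flipM_eq_permMatrix, PEquiv.mul_toMatrix_toPEquiv, PEquiv.toMatrix_toPEquiv_mul]
  simp only [submatrix_apply, transpose_apply, id_eq, hToep, Fin.revPerm_symm, Fin.revPerm_apply,
    Fin.val_rev]
  congr 1
  omega

theorem flipM_mulVec_eq_self_or_eq_neg {x : Fin n → ℝ} {β : ℝ} (hx : flipM n *ᵥ x = β • x) :
    flipM n *ᵥ x = x ∨ flipM n *ᵥ x = -x :=
  apply_eq_self_or_eq_neg_of_apply_eq_smul (J := toLin' (flipM n))
    (by rw [End.mul_eq_comp, ← toLin'_mul, flipM_mul_self, toLin'_one, End.one_eq_id]) hx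

theorem ncard_flipM_mulVec_eq_self_and_eq_neg (b : Basis (Fin n) ℝ (Fin n → ℝ))
    (hb : ∀ i, flipM n *ᵥ b i = b i ∨ flipM n *ᵥ b i = -b i) :
    {i | flipM n *ᵥ b i = b i}.ncard = (n + 1) / 2 ∧
      {i | flipM n *ᵥ b i = -b i}.ncard = n / 2 := by
  have hsum := ncard_fixed_add_ncard_negated (J := toLin' (flipM n)) two_ne_zero hb
  have hdiff := trace_eq_ncard_fixed_sub_ncard_negated (J := toLin' (flipM n)) two_ne_zero hb
  simp only [trace_toLin'_eq, trace_flipM, toLin'_apply, Nat.card_fin] at hsum hdiff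
  rw [eq_sub_iff_add_eq] at hdiff
  norm_cast at hdiff
  omega

end Flip

theorem stmt10_general {n : ℕ} {T : Matrix (Fin n) (Fin n) ℝ} (hsym : T.IsSymm)
    (hcomm : Commute T (flipM n)) :
    ∃ (v : Fin n → Fin n → ℝ) (μ : Fin n → ℝ),
      (∀ i j : Fin n, v i ⬝ᵥ v j = if i = j then (1 : ℝ) else 0) ∧
      (∀ i : Fin n, T *ᵥ v i = μ i • v i) ∧
      {i : Fin n | flipM n *ᵥ v i = v i}.ncard = (n + 1) / 2 ∧
      {i : Fin n | flipM n *ᵥ v i = -(v i)}.ncard = n / 2 := by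
  have hT : T.IsHermitian := (conjTranspose_eq_transpose_of_trivial T).trans hsym
  obtain ⟨b, μ, _, hb⟩ :=
    exists_orthonormalBasis_mulVec_eq_smul_of_commute hT isHermitian_flipM hcomm
  refine ⟨fun i => b i, μ, fun i j => ?_, fun i => (hb i).1,
    ncard_flipM_mulVec_eq_self_and_eq_neg
      (b.toBasis.map (WithLp.linearEquiv 2 ℝ (Fin n → ℝ))) fun i => ?_⟩
  · rw [← orthonormal_iff_ite.mp b.orthonormal i j, EuclideanSpace.inner_eq_star_dotProduct,
      star_trivial, dotProduct_comm]
  · simpa using flipM_mulVec_eq_self_or_eq_neg (hb i).2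

/-- Let `T` be a real symmetric `n × n` Toeplitz matrix.  Then there is
an orthonormal basis of `ℝⁿ` consisting of eigenvectors of `T` such that exactly `⌈n/2⌉`
of its vectors are symmetric (`Y_n v = v`) and the other `⌊n/2⌋` are skew-symmetric
(`Y_n v = -v`). -/
theorem stmt10
    (n : ℕ) (T : Matrix (Fin n) (Fin n) ℝ) (t : ℤ → ℝ)
    (hToep : ∀ i j : Fin n, T i j = t ((i : ℤ) - (j : ℤ)))
    (hsym : Tᵀ = T) :
    ∃ (v : Fin n → Fin n → ℝ) (μ : Fin n → ℝ),
      (∀ i j : Fin n, v i ⬝ᵥ v j = if i = j then (1:ℝ) else 0) ∧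
      (∀ i : Fin n, T *ᵥ v i = μ i • v i) ∧
      {i : Fin n | flipM n *ᵥ v i = v i}.ncard = (n + 1) / 2 ∧
      {i : Fin n | flipM n *ᵥ v i = -(v i)}.ncard = n / 2 :=
  stmt10_general hsym ((mul_flipM_of_toeplitz hToep).trans (congrArg (flipM n * ·) hsym))
end

section
/- Let T_n be a real symmetric n×n Toeplitz matrix and H_n = Y_n T_n. Let {v_1,…,v_n} be an orthonormal basis of ℝⁿ such that v_i is symmetric (Y_n v_i = v_i) for odd i and skew-symmetric (Y_n v_i = −v_i) for even i, and such that T_n v_i = λ_i v_i for i = 1,…,n, where λ_1,…,λ_n are the eigenvalues of T_n in some ordering. Then H_n v_i = (−1)^{i+1} λ_i v_i for i = 1,…,n; in particular, with V_n = [v_1|…|v_n] and Δ_n = diag_{i=1,…,n}((−1)^{i+1}), D_n = diag_{i=1,…,n}(λ_i), one has H_n = V_n Δ_n D_n V_nᵀ, so the eigenvalues of H_n are (−1)^{i+1} λ_i, i = 1,…,n. -/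
open Matrix

/-!
A common eigenvector of two matrices is an eigenvector of their product, for the product of the two
eigenvalues. For `H = Y_n T`, these relations for the columns of `V` read `H V = V (Δ D)`. Since the
columns are orthonormal, `Vᵀ V = 1`; as `V` is square, also `V Vᵀ = 1`, which lets `V` be moved to
the right-hand side.
-/

section

variable {m n R : Type*} [Fintype m]

theorem transpose_mul_self_eq_one_iff [NonAssocSemiring R] [DecidableEq n] {V : Matrix m n R} :
    Vᵀ * V = 1 ↔ ∀ i j, V.col i ⬝ᵥ V.col j = if i = j then 1 else 0 :=
  Matrix.ext_iff.symm

variable [CommSemiring R]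

theorem mul_mulVec_eq_mul_smul {A B : Matrix m m R} {a b : R} {v : m → R}
    (hA : A *ᵥ v = a • v) (hB : B *ᵥ v = b • v) : (A * B) *ᵥ v = (a * b) • v := by
  rw [← mulVec_mulVec, hB, mulVec_smul, hA, smul_smul, mul_comm]

variable [Fintype n] [DecidableEq n]

theorem mul_eq_mul_diagonal_iff {A : Matrix m m R} {V : Matrix m n R} {d : n → R} :
    A * V = V * diagonal d ↔ ∀ i, A *ᵥ V.col i = d i • V.col i := by
  have hcol (i : n) : (V * diagonal d).col i = d i • V.col i := by
    ext j
    simp only [col_apply, mul_diagonal, Pi.smul_apply, smul_eq_mul, mul_comm]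
  simp only [← hcol]
  exact ⟨fun h i => congrArg (col · i) h, ext_col⟩

theorem eq_mul_diagonal_mul_of_mul_eq_one [DecidableEq m] {A : Matrix m m R} {V : Matrix m n R}
    {W : Matrix n m R} {d : n → R} (hVW : V * W = 1) (hV : ∀ i, A *ᵥ V.col i = d i • V.col i) :
    A = V * diagonal d * W := by
  rw [← mul_eq_mul_diagonal_iff.mpr hV, Matrix.mul_assoc, hVW, Matrix.mul_one]

theorem stmt11_general {S T : Matrix n n R} {v : n → n → R} {mu lam : n → R}
    (horth : ∀ i j, v i ⬝ᵥ v j = if i = j then 1 else 0)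
    (hS : ∀ i, S *ᵥ v i = mu i • v i) (hT : ∀ i, T *ᵥ v i = lam i • v i) :
    (∀ i, (S * T) *ᵥ v i = (mu i * lam i) • v i) ∧
      S * T = (of fun j i => v i j) * (diagonal mu * diagonal lam) * (of fun j i => v i j)ᵀ := by
  have hST (i : n) : (S * T) *ᵥ v i = (mu i * lam i) • v i := mul_mulVec_eq_mul_smul (hS i) (hT i)
  have hV : (of fun j i => v i j) * (of fun j i => v i j)ᵀ = 1 :=
    mul_eq_one_comm.mp (transpose_mul_self_eq_one_iff.mpr horth)
  rw [diagonal_mul_diagonal]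
  exact ⟨hST, eq_mul_diagonal_mul_of_mul_eq_one hV hST⟩

end

/-- Let `T` be a real symmetric `n × n` Toeplitz matrix, `H = Y_n T`,
and let `v_1, …, v_n` be an orthonormal basis of `ℝⁿ` with `v_i` symmetric for odd `i`
(1-indexed; i.e. `Y_n v_i = (-1)^{i+1} v_i`) and `T v_i = λ_i v_i`.  Then
`H v_i = (-1)^{i+1} λ_i v_i` for all `i`; in particular, with `V = [v_1|…|v_n]`,
`H = V Δ D Vᵀ`, so the eigenvalues of `H` are `(-1)^{i+1} λ_i`. -/
theorem stmt11
    (n : ℕ) (T : Matrix (Fin n) (Fin n) ℝ) (t : ℤ → ℝ)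
    (hToep : ∀ i j : Fin n, T i j = t ((i : ℤ) - (j : ℤ)))
    (hsym : Tᵀ = T)
    (v : Fin n → Fin n → ℝ) (lam : Fin n → ℝ)
    (horth : ∀ i j : Fin n, v i ⬝ᵥ v j = if i = j then (1:ℝ) else 0)
    (hflip : ∀ i : Fin n, flipM n *ᵥ v i = ((-1 : ℝ) ^ (i : ℕ)) • v i)
    (heig : ∀ i : Fin n, T *ᵥ v i = lam i • v i) :
    (∀ i : Fin n, (flipM n * T) *ᵥ v i = ((-1 : ℝ) ^ (i : ℕ) * lam i) • v i) ∧
    (flipM n * T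
      = (Matrix.of fun j i => v i j)
        * (Matrix.diagonal (fun i : Fin n => ((-1 : ℝ)) ^ (i : ℕ)) * Matrix.diagonal lam)
        * (Matrix.of fun j i => v i j)ᵀ) :=
  stmt11_general horth hflip heig
end

section
/- Let {A_n}_n be a matrix-sequence with A_n of size d_n → ∞, let f : [a,b] → ℂ^{r×r} be measurable, and suppose {A_n}_n ∼_λ f. Let λ_1(f),…,λ_r(f) : [a,b] → ℂ be r measurable functions such that for every x ∈ [a,b], λ_1(f(x)),…,λ_r(f(x)) are the eigenvalues of the matrix f(x). Then for every α < β, {A_n}_n ∼_λ f̃, where f̃ : [α,β] → ℂ is the concatenation of resized versions of λ_1(f),…,λ_r(f): for j = 1,…,r and y in the j-th subinterval [α + (j−1)(β−α)/r, α + j(β−α)/r), one sets f̃(y) = λ_j(f(a + ((b−a)r/(β−α))(y − α − (j−1)(β−α)/r))) (with the last subinterval closed at β). -/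
/-!
The two limits coincide because the two symbols have the same averages. The affine bijection of
`[0,1]` onto `[α,β]` reduces the average of `F ∘ f̃` to an integral over `[0,1]`; cut into `r` equal
pieces, each rescaled to `[0,1]`, it becomes `(1/r) ∑ₖ ∫₀¹ F (λₖ (a + (b - a) s)) ds`, and the
`k`-th integral is the average of `F ∘ λₖ` over `[a,b]`.
-/

open MeasureTheory Matrix Filter

/-- The concatenation on `[α,β]` of resized versions of the `r` eigenvalue functions
`lamf 0, …, lamf (r-1)` of a matrix-valued symbol defined on `[a,b]`. -/
noncomputable def concatSymbol (r : ℕ) (hr : 0 < r) (a b α β : ℝ)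
    (lamf : Fin r → ℝ → ℂ) (y : ℝ) : ℂ :=
  let j : ℕ := min (r - 1) (Nat.floor ((y - α) * r / (β - α)))
  lamf ⟨j, lt_of_le_of_lt (min_le_left _ _) (Nat.sub_lt hr Nat.one_pos)⟩
    (a + ((b - a) * r / (β - α)) * (y - α - j * (β - α) / r))

section Averages

variable {E : Type*} [NormedAddCommGroup E]

lemma intervalIntegrable_comp_of_hasCompactSupport {X : Type*} [TopologicalSpace X]
    [MeasurableSpace X] [OpensMeasurableSpace X] {F : X → E} (hF : Continuous F)
    (hFc : HasCompactSupport F) {g : ℝ → X} (hg : Measurable g) (μ : Measure ℝ)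
    [IsLocallyFiniteMeasure μ] (a b : ℝ) :
    IntervalIntegrable (fun x => F (g x)) μ a b := by
  obtain ⟨C, hC⟩ := hFc.exists_bound_of_continuous hF
  exact (intervalIntegrable_const (c := C)).mono_fun
    ((hF.stronglyMeasurable_of_hasCompactSupport hFc).comp_measurable hg).aestronglyMeasurable
    (ae_of_all _ fun x => (hC (g x)).trans (le_abs_self C))

lemma intervalIntegrable_comp_affine_zero_one {a b : ℝ} (hab : a ≠ b) {g : ℝ → E}
    (hg : IntervalIntegrable g volume a b) :
    IntervalIntegrable (fun t => g (a + (b - a) * t)) volume 0 1 := by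
  have hba : b - a ≠ 0 := sub_ne_zero.2 hab.symm
  simpa only [sub_self, zero_div, div_self hba] using
    (hg.comp_add_left a).comp_mul_left (c := b - a)

variable [NormedSpace ℝ E]

lemma intervalAverage_eq_integral_zero_one {a b : ℝ} (hab : a ≠ b) (g : ℝ → E) :
    ⨍ x in a..b, g x = ∫ t in (0 : ℝ)..1, g (a + (b - a) * t) := by
  rw [interval_average_eq, intervalIntegral.integral_comp_add_mul g (sub_ne_zero.2 hab.symm)]
  simp only [mul_zero, add_zero, mul_one, add_sub_cancel]

lemma intervalAverage_eq_div_ofReal (g : ℝ → ℂ) (a b : ℝ) :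
    ⨍ x in a..b, g x = (∫ x in a..b, g x) / ((b - a : ℝ) : ℂ) := by
  rw [interval_average_eq, Complex.real_smul, Complex.ofReal_inv, inv_mul_eq_div]

lemma integral_zero_one_eq_inv_smul_sum {n : ℕ} (hn : n ≠ 0) {g : ℝ → E}
    (hg : ∀ k : Fin n, IntervalIntegrable (fun s => g ((s + k) / n)) volume 0 1) :
    ∫ t in (0 : ℝ)..1, g t = (n : ℝ)⁻¹ • ∑ k : Fin n, ∫ s in (0 : ℝ)..1, g ((s + k) / n) := by
  have hpiece : ∀ k < n, IntervalIntegrable (fun t => g (t / n)) volume (k : ℕ) (k + 1 : ℕ) := by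
    intro k hk
    simpa only [sub_add_cancel, sub_neg_eq_add, zero_add, Nat.cast_add_one, add_comm (1 : ℝ)] using
      (hg ⟨k, hk⟩).comp_sub_right k
  calc ∫ t in (0 : ℝ)..1, g t
      = (n : ℝ)⁻¹ • ∫ t in ((0 : ℕ) : ℝ)..n, g (t / n) := by
        rw [intervalIntegral.inv_smul_integral_comp_div, Nat.cast_zero, zero_div,
          div_self (Nat.cast_ne_zero.2 hn)]
    _ = (n : ℝ)⁻¹ • ∑ k : Fin n, ∫ t in ((k : ℕ) : ℝ)..(k + 1 : ℕ), g (t / n) := by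
        rw [← intervalIntegral.sum_integral_adjacent_intervals hpiece, Finset.sum_range]
    _ = (n : ℝ)⁻¹ • ∑ k : Fin n, ∫ s in (0 : ℝ)..1, g ((s + k) / n) := by
        simp only [intervalIntegral.integral_comp_add_right (fun t => g (t / n)), zero_add,
          Nat.cast_add_one, add_comm (1 : ℝ)]

end Averages

section ConcatSymbol

variable {r : ℕ} (hr : 0 < r) {a b α β : ℝ}

lemma concatSymbol_affine (hαβ : α ≠ β) (lamf : Fin r → ℝ → ℂ) (k : Fin r) {s : ℝ}
    (hs : s ∈ Set.Ico 0 1) :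
    concatSymbol r hr a b α β lamf (α + (β - α) * ((s + k) / r)) = lamf k (a + (b - a) * s) := by
  have hr0 : (r : ℝ) ≠ 0 := Nat.cast_ne_zero.2 hr.ne'
  have hβα : β - α ≠ 0 := sub_ne_zero.2 hαβ.symm
  have hrescale : (α + (β - α) * ((s + k) / r) - α) * r / (β - α) = s + k := by
    field_simp
    ring
  have hindex : min (r - 1) ⌊(α + (β - α) * ((s + k) / r) - α) * r / (β - α)⌋₊ = k := by
    rw [hrescale, Nat.floor_add_natCast hs.1, Nat.floor_eq_zero.2 hs.2, zero_add]
    exact min_eq_right (Nat.le_sub_one_of_lt k.isLt)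
  simp only [concatSymbol, hindex]
  congr 1
  field_simp
  ring

lemma intervalAverage_comp_concatSymbol {E : Type*} [NormedAddCommGroup E] [NormedSpace ℝ E]
    (hab : a ≠ b) (hαβ : α ≠ β) {lamf : Fin r → ℝ → ℂ} {F : ℂ → E}
    (hF : ∀ j, IntervalIntegrable (fun x => F (lamf j x)) volume a b) :
    ⨍ y in α..β, F (concatSymbol r hr a b α β lamf y) =
      (r : ℝ)⁻¹ • ∑ j, ⨍ x in a..b, F (lamf j x) := by
  have hpiece (k : Fin r) : Set.EqOn (fun s => F (lamf k (a + (b - a) * s)))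
      (fun s => F (concatSymbol r hr a b α β lamf (α + (β - α) * ((s + k) / r))))
      (Set.uIoo 0 1) := by
    intro s hs
    rw [Set.uIoo_of_le zero_le_one] at hs
    exact congrArg F (concatSymbol_affine hr hαβ lamf k (Set.Ioo_subset_Ico_self hs)).symm
  rw [intervalAverage_eq_integral_zero_one hαβ, integral_zero_one_eq_inv_smul_sum hr.ne'
    fun k => (intervalIntegrable_comp_affine_zero_one hab (hF k)).congr_uIoo (hpiece k)]
  congr 1
  refine Finset.sum_congr rfl fun k _ => ?_
  rw [intervalAverage_eq_integral_zero_one hab, intervalIntegral.integral_congr_uIoo (hpiece k)]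

end ConcatSymbol

theorem stmt15_general {ι : Type*} {l : Filter ι} (d : ι → ℕ) (z : (n : ι) → Fin (d n) → ℂ)
    {a b : ℝ} (hab : a ≠ b) {r : ℕ} (hr : 0 < r) {lamf : Fin r → ℝ → ℂ} {F : ℂ → ℂ}
    (hF : ∀ j, IntervalIntegrable (fun x => F (lamf j x)) volume a b)
    (hdist : Tendsto (fun n => (∑ i, F (z n i)) / (d n : ℂ)) l
      (nhds ((∫ x in a..b, (∑ j, F (lamf j x)) / (r : ℂ)) / ((b - a : ℝ) : ℂ))))
    {α β : ℝ} (hαβ : α ≠ β) :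
    Tendsto (fun n => (∑ i, F (z n i)) / (d n : ℂ)) l
      (nhds ((∫ y in α..β, F (concatSymbol r hr a b α β lamf y)) / ((β - α : ℝ) : ℂ))) := by
  convert hdist using 2
  rw [← intervalAverage_eq_div_ofReal, intervalAverage_comp_concatSymbol hr hab hαβ hF,
    intervalIntegral.integral_div, intervalIntegral.integral_finsetSum fun j _ => hF j]
  simp only [intervalAverage_eq_div_ofReal, ← Finset.sum_div, Complex.real_smul,
    Complex.ofReal_inv, Complex.ofReal_natCast, inv_mul_eq_div]
  exact div_right_comm _ _ _

/-- Let `{A_n}` be a matrix-sequence with `A_n` of size `d_n → ∞`, let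
`f : [a,b] → ℂ^{r×r}` be measurable with `{A_n} ∼_λ f`, and let `λ_1(f), …, λ_r(f)` be
measurable eigenvalue functions of `f`.  Then for every `α < β`, `{A_n} ∼_λ f̃`, where `f̃`
is the concatenation on `[α,β]` of resized versions of `λ_1(f), …, λ_r(f)`. -/
theorem stmt15
    (d : ℕ → ℕ) (hd : Tendsto d atTop atTop)
    (A : (n : ℕ) → Matrix (Fin (d n)) (Fin (d n)) ℂ)
    (eigs : (n : ℕ) → Fin (d n) → ℂ)
    (heigs : ∀ n : ℕ, (A n).charpoly.roots = Finset.univ.val.map (eigs n))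
    (a b : ℝ) (hab : a < b)
    (r : ℕ) (hr : 0 < r)
    (f : ℝ → Matrix (Fin r) (Fin r) ℂ)
    (hf_meas : ∀ i j : Fin r, Measurable (fun x => f x i j))
    (lamf : Fin r → ℝ → ℂ) (hlamf_meas : ∀ j, Measurable (lamf j))
    (hlamf : ∀ x ∈ Set.Icc a b,
      (f x).charpoly.roots = Finset.univ.val.map (fun j => lamf j x))
    (hdist : ∀ F : ℂ → ℂ, Continuous F → HasCompactSupport F →
      Tendsto (fun n : ℕ => (∑ i : Fin (d n), F (eigs n i)) / ((d n : ℕ) : ℂ)) atTop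
        (nhds ((∫ x in a..b, (∑ j : Fin r, F (lamf j x)) / (r : ℂ)) / ((b - a : ℝ) : ℂ))))
    (α β : ℝ) (hαβ : α < β) :
    ∀ F : ℂ → ℂ, Continuous F → HasCompactSupport F →
      Tendsto (fun n : ℕ => (∑ i : Fin (d n), F (eigs n i)) / ((d n : ℕ) : ℂ)) atTop
        (nhds ((∫ y in α..β, F (concatSymbol r hr a b α β lamf y)) / ((β - α : ℝ) : ℂ))) := by
  exact fun F hF hFc => stmt15_general d eigs hab.ne hr
    (fun j => intervalIntegrable_comp_of_hasCompactSupport hF hFc (hlamf_meas j) volume a b)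
    (hdist F hF hFc) hαβ.ne
end

section
/- Let f : [a,b] → ℝ be bounded and continuous almost everywhere with essential range ER(f) = [inf_{[a,b]} f, sup_{[a,b]} f]. Let {Λ_n = {λ_{1,n},…,λ_{d_n,n}}}_n be a sequence of finite multisets of real numbers with d_n → ∞, and assume that {Λ_n} ∼ f and that Λ_n ⊆ [inf_{[a,b]} f − ε_n, sup_{[a,b]} f + ε_n] for every n, for some sequence ε_n → 0. Then for every asymptotically uniform grid {x_{i,n}}_{i=1,…,d_n} in [a,b], if σ_n and τ_n are permutations of {1,…,d_n} such that the vectors (f(x_{σ_n(1),n}),…,f(x_{σ_n(d_n),n})) and (λ_{τ_n(1),n},…,λ_{τ_n(d_n),n}) are sorted in increasing order, then max_{i=1,…,d_n} |f(x_{σ_n(i),n}) − λ_{τ_n(i),n}| → 0 as n → ∞; in particular, min over permutations τ of max_{i=1,…,d_n} |f(x_{i,n}) − λ_{τ(i),n}| → 0 as n → ∞. -/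
open MeasureTheory Filter

/-!
Both empirical measures converge weakly to the law `μ` of `f` under the uniform distribution on
`[a, b]`. For the `λ`'s this is the hypothesis: they eventually stay in a compact set, so compactly
supported test functions suffice. For the sampled values, the empirical measure is the law of
`f ∘ g_n` under the uniform distribution, where `g_n` is the step function sending the `i`-th of
`d_n` equal cells to `x_{i,n}`, and `f ∘ g_n → f` almost everywhere.

Suppose two sorted entries with the same index differ by at least `ε`, and let `z` be their
midpoint. Then the half-lines below `z - ε / 2` for the lower sample and above `z + ε / 2` for the
upper one have total mass greater than `1`, as every index is counted and this one twice. But `μ`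
charges every interval around a point of its support `[inf f, sup f]`, so by the portmanteau theorem
and compactness this total mass is eventually less than `1`, uniformly in `z`.
-/

section

open Set Topology ProbabilityTheory
open scoped NNReal ENNReal

section EmpiricalMeasure

variable {ι κ E E' : Type*} [Fintype ι] [Fintype κ] [MeasurableSpace E] [MeasurableSpace E']

/-- The empirical measure `(1 / #ι) ∑ i, δ_{y i}` of a finite sample `y`. It is only a finite
measure, not a probability measure, because it vanishes for an empty sample. -/
noncomputable def empiricalMeasure (y : ι → E) : FiniteMeasure E :=
  (Fintype.card ι : ℝ≥0)⁻¹ • ∑ i, (diracProba (y i)).toFiniteMeasure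

theorem toMeasure_empiricalMeasure (y : ι → E) :
    (empiricalMeasure y : Measure E) = (Fintype.card ι : ℝ≥0)⁻¹ • ∑ i, Measure.dirac (y i) := by
  simp only [empiricalMeasure, FiniteMeasure.toMeasure_smul, FiniteMeasure.toMeasure_sum]
  rfl

open scoped Classical in
theorem empiricalMeasure_apply {s : Set E} (hs : MeasurableSet s) (y : ι → E) :
    empiricalMeasure y s = (Finset.card {i | y i ∈ s} : ℝ≥0) / Fintype.card ι := by
  have hsum : (∑ i, Measure.dirac (y i)) s = (Finset.card {i | y i ∈ s} : ℝ≥0∞) := by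
    simp [Measure.finsetSum_apply, Measure.dirac_apply' _ hs, Set.indicator_apply,
      Finset.sum_boole]
  simp [FiniteMeasure.coeFn_def, toMeasure_empiricalMeasure, hsum, inv_mul_eq_div]

theorem empiricalMeasure_compl_eq_zero {y : ι → E} {K : Set E} (hK : MeasurableSet K)
    (hy : ∀ i, y i ∈ K) : empiricalMeasure y Kᶜ = 0 := by
  simp [empiricalMeasure_apply hK.compl, hy]

theorem empiricalMeasure_singleton_apply [MeasurableSingletonClass E] {y : ι → E}
    (hy : Function.Injective y) (i : ι) : empiricalMeasure y {y i} = (Fintype.card ι : ℝ≥0)⁻¹ := by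
  rw [empiricalMeasure_apply (.singleton _), Finset.card_eq_one.2 ⟨i, by ext; simp [hy.eq_iff]⟩]
  simp

theorem integral_empiricalMeasure {𝕜 : Type*} [RCLike 𝕜] {F : E → 𝕜} (hF : StronglyMeasurable F)
    (y : ι → E) :
    ∫ z, F z ∂(empiricalMeasure y : Measure E) = (∑ i, F (y i)) / Fintype.card ι := by
  rw [toMeasure_empiricalMeasure, integral_smul_nnreal_measure, integral_finsetSum_measure
    fun i _ => integrable_dirac' hF enorm_lt_top]
  simp [integral_dirac' _ _ hF, NNReal.smul_def, div_eq_inv_mul, RCLike.real_smul_eq_coe_mul]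

theorem map_empiricalMeasure {g : E → E'} (hg : Measurable g) (y : ι → E) :
    (empiricalMeasure y).map g = empiricalMeasure (g ∘ y) := by
  apply FiniteMeasure.toMeasure_injective
  simp [toMeasure_empiricalMeasure, Measure.map_finset_sum' hg.aemeasurable,
    Measure.map_dirac' hg]

theorem empiricalMeasure_comp_equiv (e : κ ≃ ι) (y : ι → E) :
    empiricalMeasure (y ∘ e) = empiricalMeasure y := by
  simp only [empiricalMeasure, Fintype.card_congr e, Function.comp_apply]
  rw [e.sum_comp fun i => (diracProba (y i)).toFiniteMeasure]

theorem one_lt_empiricalMeasure_Iic_add_Ici [LinearOrder ι] [Preorder E] [TopologicalSpace E]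
    [OrderClosedTopology E] [OpensMeasurableSpace E] {lo hi : ι → E} (hlo : Monotone lo)
    (hhi : Monotone hi) {u v : E} {i : ι} (hu : lo i ≤ u) (hv : v ≤ hi i) :
    1 < empiricalMeasure lo (Iic u) + empiricalMeasure hi (Ici v) := by
  classical
  set s : Finset ι := {j | lo j ∈ Iic u}
  set t : Finset ι := {j | hi j ∈ Ici v}
  have hcard : Fintype.card ι < s.card + t.card := by
    have hunion : s ∪ t = Finset.univ := Finset.eq_univ_of_forall fun j =>
      Finset.mem_union.2 <| (le_total j i).imp
        (fun hj => by simpa [s] using (hlo hj).trans hu)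
        (fun hj => by simpa [t] using hv.trans (hhi hj))
    have hinter : 0 < (s ∩ t).card := Finset.card_pos.2 ⟨i, by simp [s, t, hu, hv]⟩
    rw [← Finset.card_union_add_card_inter, hunion, Finset.card_univ]
    lia
  have hpos : (0 : ℝ≥0) < Fintype.card ι := by exact_mod_cast Fintype.card_pos_iff.2 ⟨i⟩
  rw [empiricalMeasure_apply measurableSet_Iic, empiricalMeasure_apply measurableSet_Ici,
    ← add_div, one_lt_div hpos]
  exact_mod_cast hcard

end EmpiricalMeasure

section WeakConvergence

variable {E γ : Type*} [TopologicalSpace E] [MeasurableSpace E] [OpensMeasurableSpace E]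
  {L : Filter γ} {μs νs : γ → FiniteMeasure E} {μ : FiniteMeasure E}

theorem eventually_apply_lt_of_tendsto [HasOuterApproxClosed E] (hμ : Tendsto μs L (𝓝 μ))
    {F : Set E} (hF : IsClosed F) {c : ℝ≥0} (hc : μ F < c) : ∀ᶠ n in L, μs n F < c := by
  have hlimsup : limsup (fun n => (μs n : Measure E) F) L < c :=
    (FiniteMeasure.limsup_measure_closed_le_of_tendsto hμ hF).trans_lt
      (by rwa [← FiniteMeasure.ennreal_coeFn_eq_coeFn_toMeasure, ENNReal.coe_lt_coe])
  filter_upwards [eventually_lt_of_limsup_lt hlimsup] with n hn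
  rwa [← FiniteMeasure.ennreal_coeFn_eq_coeFn_toMeasure, ENNReal.coe_lt_coe] at hn

theorem eventually_apply_add_apply_lt_mass [HasOuterApproxClosed E] (hμ : Tendsto μs L (𝓝 μ))
    (hν : Tendsto νs L (𝓝 μ)) {F G : Set E} (hF : IsClosed F) (hG : IsClosed G)
    (hFG : Disjoint F G) (hpos : 0 < μ (F ∪ G)ᶜ) : ∀ᶠ n in L, μs n F + νs n G < μ.mass := by
  have hlt : μ F + μ G < μ.mass := by
    have hadd : μ F + μ G + μ (F ∪ G)ᶜ = μ.mass := by
      rw [← ENNReal.coe_inj]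
      push_cast [FiniteMeasure.ennreal_coeFn_eq_coeFn_toMeasure, FiniteMeasure.ennreal_mass]
      rw [← measure_union hFG hG.measurableSet,
        measure_add_measure_compl (hF.union hG).measurableSet]
    exact hadd ▸ lt_add_of_pos_right _ hpos
  obtain ⟨c, hFc, hcG⟩ := exists_between (lt_tsub_iff_right.2 hlt)
  filter_upwards [eventually_apply_lt_of_tendsto hμ hF hFc,
    eventually_apply_lt_of_tendsto hν hG (lt_tsub_comm.1 hcG)] with n hμn hνn
  calc μs n F + νs n G < c + (μ.mass - c) := add_lt_add hμn hνn
    _ = μ.mass := add_tsub_cancel_of_le (hcG.le.trans tsub_le_self)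

theorem tendsto_of_forall_hasCompactSupport_integral_tendsto (𝕜 : Type*) [RCLike 𝕜]
    [RegularSpace E] [LocallyCompactSpace E] {K : Set E} (hK : IsCompact K) (hμ : μ Kᶜ = 0)
    (hμs : ∀ᶠ n in L, μs n Kᶜ = 0)
    (h : ∀ F : E → 𝕜, Continuous F → HasCompactSupport F →
      Tendsto (fun n => ∫ z, F z ∂(μs n : Measure E)) L (𝓝 (∫ z, F z ∂(μ : Measure E)))) :
    Tendsto μs L (𝓝 μ) := by
  rw [FiniteMeasure.tendsto_iff_forall_integral_rclike_tendsto 𝕜]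
  intro F
  obtain ⟨χ, hχK, -, hχ, -⟩ :=
    exists_continuous_one_zero_of_isCompact hK isClosed_empty (disjoint_empty K)
  have hcut {ν : FiniteMeasure E} (hν : ν Kᶜ = 0) :
      ∫ z, (χ z : 𝕜) * F z ∂(ν : Measure E) = ∫ z, F z ∂(ν : Measure E) := by
    have hK_ae : K ∈ ae (ν : Measure E) := (FiniteMeasure.null_iff_toMeasure_null ν Kᶜ).1 hν
    refine integral_congr_ae ?_
    filter_upwards [hK_ae] with z hz
    simp [hχK hz]
  have htest := h (fun z => (χ z : 𝕜) * F z) (by fun_prop)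
    ((hχ.comp_left (g := ((↑) : ℝ → 𝕜)) RCLike.ofReal_zero).mul_right)
  rw [hcut hμ] at htest
  exact htest.congr' (hμs.mono fun n hn => hcut hn)

theorem tendsto_map_of_tendsto_ae {Ω : Type*} [MeasurableSpace Ω] [L.IsCountablyGenerated]
    {P : FiniteMeasure Ω} {X : γ → Ω → E} {Y : Ω → E} (hX : ∀ n, AEMeasurable (X n) P)
    (hY : AEMeasurable Y P) (h : ∀ᵐ ω ∂(P : Measure Ω), Tendsto (X · ω) L (𝓝 (Y ω))) :
    Tendsto (fun n => P.map (X n)) L (𝓝 (P.map Y)) := by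
  refine FiniteMeasure.tendsto_of_forall_integral_tendsto fun F => ?_
  have hF {Z : Ω → E} (hZ : AEMeasurable Z P) :
      ∫ z, F z ∂(P.map Z : Measure E) = ∫ ω, F (Z ω) ∂(P : Measure Ω) :=
    integral_map hZ F.continuous.measurable.aestronglyMeasurable
  simp only [hF hY, hF (hX _)]
  exact tendsto_integral_filter_of_dominated_convergence (fun _ => ‖F‖)
    (.of_forall fun n => (F.continuous.measurable.comp_aemeasurable (hX n)).aestronglyMeasurable)
    (.of_forall fun n => .of_forall fun ω => F.norm_coe_le_norm _) (integrable_const _)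
    (h.mono fun ω hω => (F.continuous.tendsto _).comp hω)

theorem tendsto_empiricalMeasure_of_forall_hasCompactSupport {κ : γ → Type*} [∀ n, Fintype (κ n)]
    {y : ∀ n, κ n → ℝ} {μ : FiniteMeasure ℝ} {K : Set ℝ} (hK : IsCompact K)
    (hμ : μ Kᶜ = 0) (hy : ∀ᶠ n in L, ∀ i, y n i ∈ K)
    (h : ∀ F : ℂ → ℂ, Continuous F → HasCompactSupport F →
      Tendsto (fun n => (∑ i, F (y n i)) / Fintype.card (κ n)) L
        (𝓝 (∫ z, F z ∂(μ : Measure ℝ)))) :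
    Tendsto (fun n => empiricalMeasure (y n)) L (𝓝 μ) := by
  have hmeas : Measurable ((↑) : ℝ → ℂ) := Complex.continuous_ofReal.measurable
  have hK' : IsCompact (((↑) : ℝ → ℂ) '' K) := hK.image Complex.continuous_ofReal
  have hlim : Tendsto (fun n => empiricalMeasure (((↑) : ℝ → ℂ) ∘ y n)) L
      (𝓝 (μ.map ((↑) : ℝ → ℂ))) := by
    refine tendsto_of_forall_hasCompactSupport_integral_tendsto ℂ hK' ?_ ?_ fun F hF hFc => ?_
    · rw [FiniteMeasure.map_apply _ hmeas hK'.measurableSet.compl, preimage_compl,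
        Complex.ofReal_injective.preimage_image, hμ]
    · exact hy.mono fun n hn =>
        empiricalMeasure_compl_eq_zero hK'.measurableSet fun i => mem_image_of_mem _ (hn i)
    · simp only [integral_empiricalMeasure hF.stronglyMeasurable, FiniteMeasure.toMeasure_map]
      rw [integral_map hmeas.aemeasurable hF.aestronglyMeasurable]
      exact h F hF hFc
  have hre : (μ.map ((↑) : ℝ → ℂ)).map Complex.re = μ := by
    apply FiniteMeasure.toMeasure_injective
    rw [FiniteMeasure.toMeasure_map, FiniteMeasure.toMeasure_map,
      Measure.map_map Complex.measurable_re hmeas]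
    exact Measure.map_id
  have hpush := FiniteMeasure.tendsto_map_of_tendsto_of_continuous _ _ hlim Complex.continuous_re
  simp only [map_empiricalMeasure Complex.measurable_re] at hpush
  rwa [hre] at hpush

end WeakConvergence

section Matching

variable {γ : Type*} {L : Filter γ} {μ : FiniteMeasure ℝ} {m M ε : ℝ}

theorem eventually_forall_apply_Iic_add_Ici_lt_mass {μs νs : γ → FiniteMeasure ℝ}
    (hμ : Tendsto μs L (𝓝 μ)) (hν : Tendsto νs L (𝓝 μ)) {K : Set ℝ} (hK : IsCompact K)
    (hsupp : K ⊆ (μ : Measure ℝ).support) (hε : 0 < ε) :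
    ∀ᶠ n in L, ∀ z ∈ K, μs n (Iic (z - ε)) + νs n (Ici (z + ε)) < μ.mass := by
  refine hK.induction_on
    (p := fun s => ∀ᶠ n in L, ∀ z ∈ s, μs n (Iic (z - ε)) + νs n (Ici (z + ε)) < μ.mass)
    (by simp) (fun s t hst ht => ht.mono fun n hn z hz => hn z (hst hz))
    (fun s t hs ht => (hs.and ht).mono fun n hn z hz => hz.elim (hn.1 z) (hn.2 z))
    fun z₀ hz₀ => ⟨_, mem_nhdsWithin_of_mem_nhds (Metric.ball_mem_nhds z₀ (half_pos hε)), ?_⟩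
  have hgap : (Iic (z₀ - ε / 2) ∪ Ici (z₀ + ε / 2))ᶜ = Metric.ball z₀ (ε / 2) := by
    rw [compl_union, compl_Iic, compl_Ici, Ioi_inter_Iio, Real.ball_eq_Ioo]
  have hpos : 0 < μ (Metric.ball z₀ (ε / 2)) := by
    rw [← ENNReal.coe_pos, FiniteMeasure.ennreal_coeFn_eq_coeFn_toMeasure]
    exact Metric.nhds_basis_ball.mem_measureSupport.1 (hsupp hz₀) _ (half_pos hε)
  filter_upwards [eventually_apply_add_apply_lt_mass hμ hν isClosed_Iic isClosed_Ici
    (Iic_disjoint_Ici.2 (by linarith)) (hgap ▸ hpos)] with n hn z hz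
  rw [Real.ball_eq_Ioo] at hz
  refine lt_of_le_of_lt (add_le_add ?_ ?_) hn
  · exact FiniteMeasure.apply_mono _ (Iic_subset_Iic.2 (by linarith [hz.2]))
  · exact FiniteMeasure.apply_mono _ (Ici_subset_Ici.2 (by linarith [hz.1]))

variable {κ : γ → Type*} [∀ n, Fintype (κ n)] [∀ n, LinearOrder (κ n)]

theorem eventually_forall_lt_add_of_tendsto_empiricalMeasure
    {lo hi : ∀ n, κ n → ℝ} {σ τ : ∀ n, Equiv.Perm (κ n)}
    (hμ : μ.mass = 1) (hsupp : Icc m M ⊆ (μ : Measure ℝ).support)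
    (hlo : ∀ n, Monotone (lo n ∘ σ n)) (hhi : ∀ n, Monotone (hi n ∘ τ n))
    (hlo_lim : Tendsto (fun n => empiricalMeasure (lo n)) L (𝓝 μ))
    (hhi_lim : Tendsto (fun n => empiricalMeasure (hi n)) L (𝓝 μ))
    (hlo_ge : ∀ δ > 0, ∀ᶠ n in L, ∀ i, m - δ ≤ lo n i)
    (hhi_le : ∀ δ > 0, ∀ᶠ n in L, ∀ i, hi n i ≤ M + δ) (hε : 0 < ε) :
    ∀ᶠ n in L, ∀ i, hi n (τ n i) < lo n (σ n i) + ε := by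
  filter_upwards [hlo_ge _ (half_pos hε), hhi_le _ (half_pos hε),
    eventually_forall_apply_Iic_add_Ici_lt_mass hlo_lim hhi_lim isCompact_Icc hsupp (half_pos hε)]
    with n hlo_n hhi_n hlevel i
  by_contra! hgap
  set z := (lo n (σ n i) + hi n (τ n i)) / 2 with hz
  have hlo_z : lo n (σ n i) ≤ z - ε / 2 := by linarith
  have hhi_z : z + ε / 2 ≤ hi n (τ n i) := by linarith
  have hlt := hlevel z ⟨by linarith [hlo_n (σ n i)], by linarith [hhi_n (τ n i)]⟩
  rw [hμ, ← empiricalMeasure_comp_equiv (σ n) (lo n),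
    ← empiricalMeasure_comp_equiv (τ n) (hi n)] at hlt
  exact hlt.not_gt (one_lt_empiricalMeasure_Iic_add_Ici (hlo n) (hhi n) hlo_z hhi_z)

theorem eventually_forall_abs_sub_lt_of_tendsto_empiricalMeasure
    {y w : ∀ n, κ n → ℝ} {σ τ : ∀ n, Equiv.Perm (κ n)}
    (hμ : μ.mass = 1) (hsupp : Icc m M ⊆ (μ : Measure ℝ).support)
    (hy : ∀ n, Monotone (y n ∘ σ n)) (hw : ∀ n, Monotone (w n ∘ τ n))
    (hy_lim : Tendsto (fun n => empiricalMeasure (y n)) L (𝓝 μ))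
    (hw_lim : Tendsto (fun n => empiricalMeasure (w n)) L (𝓝 μ))
    (hy_mem : ∀ δ > 0, ∀ᶠ n in L, ∀ i, y n i ∈ Icc (m - δ) (M + δ))
    (hw_mem : ∀ δ > 0, ∀ᶠ n in L, ∀ i, w n i ∈ Icc (m - δ) (M + δ)) (hε : 0 < ε) :
    ∀ᶠ n in L, ∀ i, |y n (σ n i) - w n (τ n i)| < ε := by
  have hge {u : ∀ n, κ n → ℝ} (hu : ∀ δ > 0, ∀ᶠ n in L, ∀ i, u n i ∈ Icc (m - δ) (M + δ)) :
      ∀ δ > 0, ∀ᶠ n in L, ∀ i, m - δ ≤ u n i := fun δ hδ => (hu δ hδ).mono fun n h i => (h i).1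
  have hle {u : ∀ n, κ n → ℝ} (hu : ∀ δ > 0, ∀ᶠ n in L, ∀ i, u n i ∈ Icc (m - δ) (M + δ)) :
      ∀ δ > 0, ∀ᶠ n in L, ∀ i, u n i ≤ M + δ := fun δ hδ => (hu δ hδ).mono fun n h i => (h i).2
  filter_upwards [
    eventually_forall_lt_add_of_tendsto_empiricalMeasure hμ hsupp hy hw hy_lim hw_lim
      (hge hy_mem) (hle hw_mem) hε,
    eventually_forall_lt_add_of_tendsto_empiricalMeasure hμ hsupp hw hy hw_lim hy_lim
      (hge hw_mem) (hle hy_mem) hε]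
    with n hwy hyw i
  exact abs_sub_lt_iff.2 ⟨by linarith [hyw i], by linarith [hwy i]⟩

end Matching

section UniformMeasure

/-- The uniform distribution on `s`; it is the zero measure if `s` has volume `0` or `∞`. The limit
prescribed by `{Λ_n} ∼ g`, for `g` defined on `s`, is the law of `g` under it. -/
noncomputable def uniformMeasure (s : Set ℝ) : FiniteMeasure ℝ :=
  ⟨volume[|s], inferInstance⟩

theorem aemeasurable_of_ae_continuousWithinAt {X Y : Type*} [TopologicalSpace X]
    [MeasurableSpace X] [OpensMeasurableSpace X] [TopologicalSpace Y] [MeasurableSpace Y]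
    [BorelSpace Y] {ν : Measure X} {f : X → Y} {s : Set X} (hs : ∀ᵐ t ∂ν, t ∈ s)
    (hf : ∀ᵐ t ∂ν, ContinuousWithinAt f s t) : AEMeasurable f ν := by
  obtain ⟨u, hu, hu_meas, hu_cont⟩ := (hs.and hf).exists_measurable_mem
  have hf_on : ContinuousOn f u := fun t ht =>
    (hu_cont t ht).2.mono fun t' ht' => (hu_cont t' ht').1
  rw [← Measure.restrict_eq_self_of_ae_mem hu]
  exact hf_on.aemeasurable hu_meas

theorem aemeasurable_uniformMeasure_of_ae_continuousWithinAt {Y : Type*} [TopologicalSpace Y]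
    [MeasurableSpace Y] [BorelSpace Y] {f : ℝ → Y} {s : Set ℝ} (hs : MeasurableSet s)
    (hf : ∀ᵐ t ∂volume.restrict s, ContinuousWithinAt f s t) :
    AEMeasurable f (uniformMeasure s) :=
  (aemeasurable_of_ae_continuousWithinAt (ae_restrict_mem hs) hf).smul_measure _

theorem mass_map_uniformMeasure {E : Type*} [MeasurableSpace E] {f : ℝ → E} {s : Set ℝ}
    (hf : AEMeasurable f (uniformMeasure s)) (hs₀ : volume s ≠ 0) (hs : volume s ≠ ∞) :
    ((uniformMeasure s).map f).mass = 1 := by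
  have := cond_isProbabilityMeasure_of_finite hs₀ hs
  rw [FiniteMeasure.mass, FiniteMeasure.map_apply_of_aemeasurable _ hf .univ]
  simp [uniformMeasure]

theorem map_uniformMeasure_compl_eq_zero {E : Type*} [MeasurableSpace E] {f : ℝ → E} {s : Set ℝ}
    (hf : AEMeasurable f (uniformMeasure s)) (hs : MeasurableSet s) {K : Set E}
    (hK : MeasurableSet K) (hfK : MapsTo f s K) : (uniformMeasure s).map f Kᶜ = 0 := by
  rw [FiniteMeasure.map_apply_of_aemeasurable _ hf hK.compl, FiniteMeasure.null_iff_toMeasure_null]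
  exact ae_cond_of_forall_mem hs hfK

theorem essRangeR_subset_support_map_uniformMeasure {f : ℝ → ℝ} {s : Set ℝ}
    (hf : AEMeasurable f (uniformMeasure s)) (hsm : MeasurableSet s) (hs : volume s ≠ ∞) :
    essRangeR f s ⊆ ((uniformMeasure s).map f : Measure ℝ).support := by
  intro z hz
  rw [Metric.nhds_basis_ball.mem_measureSupport]
  intro ε hε
  rw [FiniteMeasure.toMeasure_map, Measure.map_apply_of_aemeasurable hf measurableSet_ball]
  change 0 < volume[|s] _
  rw [cond_apply hsm]
  exact ENNReal.mul_pos (ENNReal.inv_ne_zero.2 hs) (hz ε hε).ne'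

theorem integral_map_uniformMeasure_Icc {a b : ℝ} (hab : a ≤ b) {f : ℝ → ℝ}
    (hf : AEMeasurable f (uniformMeasure (Icc a b))) {F : ℝ → ℂ} (hF : Continuous F) :
    ∫ z, F z ∂((uniformMeasure (Icc a b)).map f : Measure ℝ)
      = (∫ t in a..b, F (f t)) / ((b - a : ℝ) : ℂ) := by
  rw [FiniteMeasure.toMeasure_map, integral_map hf hF.aestronglyMeasurable,
    intervalIntegral.integral_of_le hab, ← integral_Icc_eq_integral_Ioc]
  simp [uniformMeasure, ProbabilityTheory.cond, integral_smul_measure, hab, div_eq_inv_mul]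

theorem tendsto_empiricalMeasure_map_uniformMeasure {γ : Type*} {L : Filter γ} {κ : γ → Type*}
    [∀ n, Fintype (κ n)] {a b : ℝ} (hab : a ≤ b) {f : ℝ → ℝ}
    (hf : AEMeasurable f (uniformMeasure (Icc a b))) {K : Set ℝ} (hK : IsCompact K)
    (hfK : MapsTo f (Icc a b) K) {y : ∀ n, κ n → ℝ} (hy : ∀ᶠ n in L, ∀ i, y n i ∈ K)
    (h : ∀ F : ℂ → ℂ, Continuous F → HasCompactSupport F →
      Tendsto (fun n => (∑ i, F (y n i)) / Fintype.card (κ n)) L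
        (𝓝 ((∫ t in a..b, F (f t)) / ((b - a : ℝ) : ℂ)))) :
    Tendsto (fun n => empiricalMeasure (y n)) L (𝓝 ((uniformMeasure (Icc a b)).map f)) := by
  refine tendsto_empiricalMeasure_of_forall_hasCompactSupport hK
    (map_uniformMeasure_compl_eq_zero hf measurableSet_Icc hK.measurableSet hfK) hy
    fun F hF hFc => ?_
  have hlaw := integral_map_uniformMeasure_Icc hab hf (hF.comp Complex.continuous_ofReal)
  exact hlaw ▸ h F hF hFc

end UniformMeasure

section Sampling

/-- The index (from `0` to `N - 1`) of the cell containing `t ∈ [a, b)` in the subdivision of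
`[a, b)` into `N` half-open cells of equal length; it equals `N` at `t = b`. -/
noncomputable def cellIndex (a b : ℝ) (N : ℕ) (t : ℝ) : ℕ :=
  ⌊N * ((t - a) / (b - a))⌋₊

/-- The grids `{x n i}_i` are asymptotically uniform in `[a, b]`. The points are numbered from
`0`, so `x n i` is compared with the `(i + 1)`-st node. -/
def IsAsymptoticallyUniform {γ : Type*} (L : Filter γ) (a b : ℝ) (d : γ → ℕ)
    (x : ∀ n, Fin (d n) → ℝ) : Prop :=
  ∀ ε > 0, ∀ᶠ n in L, ∀ i, |x n i - (a + ((i : ℕ) + 1) * (b - a) / (d n + 1))| < ε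

variable {a b : ℝ}

theorem measurable_cellIndex (N : ℕ) : Measurable (cellIndex a b N) := by
  unfold cellIndex
  fun_prop

theorem cellIndex_eq_iff (hab : a < b) {N k : ℕ} {t : ℝ} (hN : 0 < N) (ht : a ≤ t) :
    cellIndex a b N t = k ↔ t ∈ Ico (a + k * (b - a) / N) (a + (k + 1) * (b - a) / N) := by
  have hba : 0 < b - a := sub_pos.2 hab
  have hN' : (0 : ℝ) < N := by exact_mod_cast hN
  rw [cellIndex, Nat.floor_eq_iff (by have := sub_nonneg.2 ht; positivity), mem_Ico,
    ← le_sub_iff_add_le', ← sub_lt_iff_lt_add' (b := a), div_le_iff₀ hN', lt_div_iff₀ hN',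
    ← mul_div_assoc, le_div_iff₀ hba, div_lt_iff₀ hba, mul_comm (t - a)]

theorem cellIndex_lt (hab : a < b) {N : ℕ} (hN : 0 < N) {t : ℝ} (ht : t ∈ Ico a b) :
    cellIndex a b N t < N := by
  have hN' : (0 : ℝ) < N := by exact_mod_cast hN
  have hba : 0 < b - a := sub_pos.2 hab
  have hr : (t - a) / (b - a) < 1 := (div_lt_one hba).2 (by linarith [ht.2])
  exact Nat.floor_lt' hN.ne' |>.2 (mul_lt_of_lt_one_right hN' hr)

theorem abs_node_cellIndex_sub_le (hab : a < b) {N : ℕ} {t : ℝ} (ht : t ∈ Ico a b) :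
    |a + (cellIndex a b N t + 1) * (b - a) / (N + 1) - t| ≤ (b - a) / (N + 1) := by
  have hba : 0 < b - a := sub_pos.2 hab
  set r := (t - a) / (b - a) with hr
  have hr₀ : 0 ≤ r := div_nonneg (sub_nonneg.2 ht.1) hba.le
  have hr₁ : r < 1 := (div_lt_one hba).2 (by linarith [ht.2])
  have ht_eq : t = a + r * (b - a) := by rw [hr]; field_simp; ring
  have hfloor := Nat.floor_le (show 0 ≤ N * r by positivity)
  have hfloor' := Nat.lt_floor_add_one (N * r)
  have hdiff : a + (cellIndex a b N t + 1) * (b - a) / (N + 1) - t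
      = (⌊N * r⌋₊ + 1 - (N + 1) * r) * ((b - a) / (N + 1)) := by
    rw [cellIndex, ← hr, ht_eq]
    field_simp
    ring
  rw [hdiff, abs_mul, abs_of_pos (show 0 < (b - a) / (N + 1) by positivity)]
  exact mul_le_of_le_one_left (by positivity) (abs_le.2 ⟨by linarith, by linarith⟩)

theorem volume_Icc_inter_cellIndex_preimage (hab : a < b) {N k : ℕ} (hk : k < N) :
    volume (Icc a b ∩ cellIndex a b N ⁻¹' {k}) = ENNReal.ofReal ((b - a) / N) := by
  have hN : 0 < N := hk.pos
  have hN' : (0 : ℝ) < N := by exact_mod_cast hN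
  have hk' : (k : ℝ) + 1 ≤ N := by exact_mod_cast hk
  have hba : 0 < b - a := sub_pos.2 hab
  have hcell : Icc a b ∩ cellIndex a b N ⁻¹' {k}
      = Ico (a + k * (b - a) / N) (a + (k + 1) * (b - a) / N) := by
    have hleft : a ≤ a + k * (b - a) / N :=
      le_add_of_nonneg_right (div_nonneg (mul_nonneg k.cast_nonneg hba.le) hN'.le)
    have hright : a + (k + 1) * (b - a) / N ≤ b := by
      rw [← le_sub_iff_add_le', div_le_iff₀ hN', mul_comm]
      gcongr
    ext t
    refine ⟨fun ht => (cellIndex_eq_iff hab hN ht.1.1).1 ht.2, fun ht => ?_⟩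
    have hat : a ≤ t := hleft.trans ht.1
    exact ⟨⟨hat, (ht.2.trans_le hright).le⟩, (cellIndex_eq_iff hab hN hat).2 ht⟩
  rw [hcell, Real.volume_Ico]
  congr 1
  ring

theorem volume_Icc_inter_cellIndex_preimage_of_le (hab : a < b) {N k : ℕ} (hN : 0 < N)
    (hk : N ≤ k) : volume (Icc a b ∩ cellIndex a b N ⁻¹' {k}) = 0 := by
  refine measure_mono_null (fun t ht => ?_) (Real.volume_singleton (a := b))
  by_contra htb
  have hlt := cellIndex_lt hab hN ⟨ht.1.1, lt_of_le_of_ne ht.1.2 htb⟩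
  exact hlt.not_ge (hk.trans_eq ht.2.symm)

theorem map_cellIndex_uniformMeasure (hab : a < b) {N : ℕ} (hN : 0 < N) :
    (uniformMeasure (Icc a b)).map (cellIndex a b N) = empiricalMeasure (Fin.val : Fin N → ℕ) := by
  have hba : 0 < b - a := sub_pos.2 hab
  refine FiniteMeasure.toMeasure_injective (Measure.ext_of_singleton fun k => ?_)
  have hlaw : ((uniformMeasure (Icc a b)).map (cellIndex a b N) : Measure ℕ) {k}
      = (ENNReal.ofReal (b - a))⁻¹ * volume (Icc a b ∩ cellIndex a b N ⁻¹' {k}) := by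
    rw [FiniteMeasure.toMeasure_map, Measure.map_apply (measurable_cellIndex N) (.singleton k)]
    exact (cond_apply measurableSet_Icc _ _).trans (by rw [Real.volume_Icc])
  rw [hlaw, ← FiniteMeasure.ennreal_coeFn_eq_coeFn_toMeasure]
  rcases lt_or_ge k N with hk | hk
  · have hsample : empiricalMeasure (Fin.val : Fin N → ℕ) {k} = (N : ℝ≥0)⁻¹ := by
      simpa using empiricalMeasure_singleton_apply Fin.val_injective (⟨k, hk⟩ : Fin N)
    rw [volume_Icc_inter_cellIndex_preimage hab hk, hsample, ← ENNReal.ofReal_inv_of_pos hba,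
      ← ENNReal.ofReal_mul (by positivity), inv_mul_eq_div, div_div_cancel_left' hba.ne']
    simp [ENNReal.ofReal_inv_of_pos (show (0 : ℝ) < N by exact_mod_cast hN), hN.ne']
  · have hsample : empiricalMeasure (Fin.val : Fin N → ℕ) {k} = 0 := by
      rw [← compl_compl ({k} : Set ℕ)]
      exact empiricalMeasure_compl_eq_zero (.compl (.singleton k)) fun i => (i.2.trans_le hk).ne
    rw [volume_Icc_inter_cellIndex_preimage_of_le hab hN hk, hsample, mul_zero, ENNReal.coe_zero]

theorem map_uniformMeasure_extend_cellIndex (hab : a < b) {N : ℕ} (hN : 0 < N) {E : Type*}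
    [MeasurableSpace E] (y : Fin N → E) (c : E) :
    (uniformMeasure (Icc a b)).map (Function.extend Fin.val y (fun _ => c) ∘ cellIndex a b N)
      = empiricalMeasure y := by
  have hext : Function.extend Fin.val y (fun _ => c) ∘ Fin.val = y :=
    Function.extend_comp Fin.val_injective _ _
  conv_rhs => rw [← hext]
  rw [← map_empiricalMeasure measurable_from_nat, ← map_cellIndex_uniformMeasure hab hN]
  apply FiniteMeasure.toMeasure_injective
  exact (Measure.map_map measurable_from_nat (measurable_cellIndex N)).symm

variable {γ : Type*} {L : Filter γ} {d : γ → ℕ} {x : ∀ n, Fin (d n) → ℝ}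

theorem tendsto_extend_cellIndex (hab : a < b) (hd : Tendsto d L atTop)
    (hx : IsAsymptoticallyUniform L a b d x) (c : ℝ) {t : ℝ} (ht : t ∈ Ico a b) :
    Tendsto (fun n => Function.extend Fin.val (x n) (fun _ => c) (cellIndex a b (d n) t)) L
      (𝓝 t) := by
  have hmesh : Tendsto (fun n => (b - a) / ((d n : ℝ) + 1)) L (𝓝 0) :=
    ((tendsto_natCast_atTop_atTop.comp hd).atTop_add tendsto_const_nhds).const_div_atTop _
  refine Metric.tendsto_nhds.2 fun ε hε => ?_
  filter_upwards [hd.eventually_gt_atTop 0, hx _ (half_pos hε),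
    hmesh.eventually_lt_const (half_pos hε)] with n hn hx_n hmesh_n
  have hext := Fin.val_injective.extend_apply (x n) (fun _ => c) ⟨_, cellIndex_lt hab hn ht⟩
  rw [hext, Real.dist_eq]
  refine (abs_sub_le _ (a + (cellIndex a b (d n) t + 1) * (b - a) / (d n + 1)) _).trans_lt ?_
  linarith [hx_n ⟨_, cellIndex_lt hab hn ht⟩, abs_node_cellIndex_sub_le (N := d n) hab ht]

theorem ae_tendsto_extend_cellIndex (hab : a < b) {f : ℝ → ℝ}
    (hf : ∀ᵐ t ∂volume.restrict (Icc a b), ContinuousWithinAt f (Icc a b) t)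
    (hd : Tendsto d L atTop) (hx_mem : ∀ n i, x n i ∈ Icc a b)
    (hx : IsAsymptoticallyUniform L a b d x) :
    ∀ᵐ t ∂(uniformMeasure (Icc a b) : Measure ℝ),
      Tendsto (fun n => Function.extend Fin.val (f ∘ x n) (fun _ => f a) (cellIndex a b (d n) t)) L
        (𝓝 (f t)) := by
  refine Measure.ae_smul_measure ?_ _
  filter_upwards [hf, ae_restrict_mem measurableSet_Icc, Measure.ae_ne _ b] with t hft ht htb
  have hmem (n : γ) :
      Function.extend Fin.val (x n) (fun _ => a) (cellIndex a b (d n) t) ∈ Icc a b := by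
    rw [Function.extend_def]
    split_ifs
    exacts [hx_mem n _, left_mem_Icc.2 hab.le]
  have hnode := tendsto_extend_cellIndex hab hd hx a ⟨ht.1, lt_of_le_of_ne ht.2 htb⟩
  have hlim := hft.tendsto.comp
    (tendsto_nhdsWithin_iff.2 ⟨hnode, Eventually.of_forall hmem⟩)
  simpa only [Function.comp_def, Function.apply_extend f] using hlim

theorem tendsto_empiricalMeasure_comp_of_isAsymptoticallyUniform [L.IsCountablyGenerated]
    (hab : a < b) {f : ℝ → ℝ}
    (hf : ∀ᵐ t ∂volume.restrict (Icc a b), ContinuousWithinAt f (Icc a b) t)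
    (hd : Tendsto d L atTop) (hx_mem : ∀ n i, x n i ∈ Icc a b)
    (hx : IsAsymptoticallyUniform L a b d x) :
    Tendsto (fun n => empiricalMeasure (f ∘ x n)) L (𝓝 ((uniformMeasure (Icc a b)).map f)) := by
  have hmeas (n : γ) : Measurable fun t =>
      Function.extend Fin.val (f ∘ x n) (fun _ => f a) (cellIndex a b (d n) t) :=
    measurable_from_nat.comp (g := Function.extend Fin.val (f ∘ x n) fun _ => f a)
      (measurable_cellIndex (d n))
  have hf_meas : AEMeasurable f (uniformMeasure (Icc a b)) :=
    aemeasurable_uniformMeasure_of_ae_continuousWithinAt measurableSet_Icc hf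
  refine (tendsto_map_of_tendsto_ae (fun n => (hmeas n).aemeasurable) hf_meas
    (ae_tendsto_extend_cellIndex hab hf hd hx_mem hx)).congr' ?_
  filter_upwards [hd.eventually_gt_atTop 0] with n hn
  exact map_uniformMeasure_extend_cellIndex hab hn _ _

end Sampling

theorem mapsTo_Icc_sInf_sSup {α : Type*} {f : α → ℝ} {s : Set α}
    (hf : ∃ C, ∀ t ∈ s, |f t| ≤ C) : MapsTo f s (Icc (sInf (f '' s)) (sSup (f '' s))) := by
  obtain ⟨C, hC⟩ := hf
  exact mapsTo_iff_image_subset.2 (isBounded_iff_forall_norm_le.2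
    ⟨C, forall_mem_image.2 fun t ht => hC t ht⟩).subset_Icc_sInf_sSup

end

/-- Let `f : [a,b] → ℝ` be bounded and continuous a.e. with essential
range `[inf f, sup f]`, and let `{Λ_n}` be multisets of reals with `{Λ_n} ∼ f` and
`Λ_n ⊆ [inf f - ε_n, sup f + ε_n]`, `ε_n → 0`.  Then for every asymptotically uniform grid
in `[a,b]`, if `σ_n, τ_n` sort the sampled values and the `λ`'s increasingly, the maximal
difference of the matched sorted vectors tends to `0`; in particular
`min_τ max_i |f(x_{i,n}) - λ_{τ(i),n}| → 0`. -/
theorem stmt16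
    (a b : ℝ) (hab : a < b) (f : ℝ → ℝ)
    (hf_bdd : ∃ C : ℝ, ∀ x ∈ Set.Icc a b, |f x| ≤ C)
    (hf_cae : ∀ᵐ x ∂(volume.restrict (Set.Icc a b)),
      ContinuousWithinAt f (Set.Icc a b) x)
    (hER : essRangeR f (Set.Icc a b)
      = Set.Icc (sInf (f '' Set.Icc a b)) (sSup (f '' Set.Icc a b)))
    (d : ℕ → ℕ) (hd : Tendsto d atTop atTop)
    (lam : (n : ℕ) → Fin (d n) → ℝ)
    (hdist : ∀ F : ℂ → ℂ, Continuous F → HasCompactSupport F →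
      Tendsto (fun n : ℕ => (∑ i : Fin (d n), F ((lam n i : ℝ) : ℂ)) / ((d n : ℕ) : ℂ)) atTop
        (nhds ((∫ x in a..b, F ((f x : ℝ) : ℂ)) / ((b - a : ℝ) : ℂ))))
    (eps : ℕ → ℝ) (heps : Tendsto eps atTop (nhds 0))
    (hloc : ∀ n : ℕ, ∀ i : Fin (d n),
      lam n i ∈ Set.Icc (sInf (f '' Set.Icc a b) - eps n) (sSup (f '' Set.Icc a b) + eps n))
    (x : (n : ℕ) → Fin (d n) → ℝ)
    (hx_mem : ∀ n : ℕ, ∀ i : Fin (d n), x n i ∈ Set.Icc a b)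
    (hx_au : ∀ ε > (0:ℝ), ∃ N : ℕ, ∀ n ≥ N, ∀ i : Fin (d n),
      |x n i - (a + ((i : ℕ) + 1) * (b - a) / (d n + 1))| < ε) :
    (∀ σ τ : (n : ℕ) → Equiv.Perm (Fin (d n)),
      (∀ n : ℕ, Monotone fun i : Fin (d n) => f (x n (σ n i))) →
      (∀ n : ℕ, Monotone fun i : Fin (d n) => lam n (τ n i)) →
      ∀ ε > (0:ℝ), ∃ N : ℕ, ∀ n ≥ N, ∀ i : Fin (d n),
        |f (x n (σ n i)) - lam n (τ n i)| < ε) ∧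
    (∀ ε > (0:ℝ), ∃ N : ℕ, ∀ n ≥ N, ∃ τ : Equiv.Perm (Fin (d n)), ∀ i : Fin (d n),
      |f (x n i) - lam n (τ i)| < ε) := by
  set m := sInf (f '' Set.Icc a b)
  set M := sSup (f '' Set.Icc a b)
  have hf := aemeasurable_uniformMeasure_of_ae_continuousWithinAt measurableSet_Icc hf_cae
  have hf_mem : ∀ δ > 0, Set.MapsTo f (Set.Icc a b) (Set.Icc (m - δ) (M + δ)) := fun δ hδ =>
    (mapsTo_Icc_sInf_sSup hf_bdd).mono_right (Set.Icc_subset_Icc (by linarith) (by linarith))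
  have hlam_mem : ∀ δ > 0, ∀ᶠ n in atTop, ∀ i, lam n i ∈ Set.Icc (m - δ) (M + δ) := fun δ hδ =>
    (heps.eventually_le_const hδ).mono fun n hn i =>
      Set.Icc_subset_Icc (by linarith) (by linarith) (hloc n i)
  have hlam_lim := tendsto_empiricalMeasure_map_uniformMeasure hab.le hf isCompact_Icc
    (hf_mem 1 one_pos) (hlam_mem 1 one_pos) (by simpa only [Fintype.card_fin] using hdist)
  have hx_lim := tendsto_empiricalMeasure_comp_of_isAsymptoticallyUniform hab hf_cae hd hx_mem
    fun ε hε => eventually_atTop.2 (hx_au ε hε)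
  have hsupp := hER.ge.trans
    (essRangeR_subset_support_map_uniformMeasure hf measurableSet_Icc (by simp))
  have hsorted {σ τ : ∀ n, Equiv.Perm (Fin (d n))} hσ hτ {ε : ℝ} hε :=
    eventually_atTop.1 <| eventually_forall_abs_sub_lt_of_tendsto_empiricalMeasure
      (σ := σ) (τ := τ) (ε := ε) (mass_map_uniformMeasure hf (by simp [hab]) (by simp)) hsupp hσ hτ
      hx_lim hlam_lim
      (fun δ hδ => .of_forall fun n i => hf_mem δ hδ (hx_mem n i)) hlam_mem hε
  refine ⟨fun σ τ hσ hτ ε hε => hsorted hσ hτ hε, fun ε hε => ?_⟩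
  obtain ⟨N, hN⟩ := hsorted (fun n => Tuple.monotone_sort (f ∘ x n))
    (fun n => Tuple.monotone_sort (lam n)) hε
  refine ⟨N, fun n hn => ⟨(Tuple.sort (f ∘ x n)).symm.trans (Tuple.sort (lam n)), fun i => ?_⟩⟩
  simpa using hN n hn ((Tuple.sort (f ∘ x n)).symm i)
end
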